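/- If (58, 4)_ℕ is a universal pair over the natural numbers, then (11, η(58, 4))_ℤ is a universal pair over the integers, where η(ν, δ) = 15616 + 233856·δ + 233952·δ·(2δ+1)^(ν+1) + 467712·δ²·(2δ+1)^(ν+1); in particular η(58, 4) = 951040 + 8419200·9^59 < 1.68105·10^63. -/

import Mathlib

/-!
Let `P(a, z) = 0` be an equation of degree at most `4` in `58` natural unknowns. It is replaced by a
single equation in `11` integer unknowns, as follows.

**Coding.** Put `β = 1 + (2 a + 1) f` and assume that `β` is, up to sign, a power of two exceeding
all the unknowns. A tuple `z` is coded by the number `g` whose only nonzero digits, in a suitable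
base `Q` that is a power of two, are the `z i` in the positions `(δ + 1) ^ (i + 1)`. By Kronecker
substitution, the value of `P` at `(a, z)` can be read off, up to a nonzero factor, from one digit of
`K = (1 + a Q + g) ^ δ c(Q) + …`. Hence the statement that `g` is the code of a zero of `P` says that
two explicit numbers `S`, `T` (`cS`, `cT`) have no common binary digit (`mask_iff`, `cK_mod`). Since
the exponent of `2` in the central binomial coefficient of `X` is the number of binary ones of `X`,
this becomes one divisibility `Y ∣ (2 X choose X)`, where `X` and `Y` are polynomials in `a`, `f`, `g`
(`coding_iff`). The condition on `β` is imposed as `β ∣ 2 ^ X`.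

**Pell equations.** For `V` large, `(V + 1) ^ (2 X) / V ^ X` is close to an integer congruent to
`(2 X choose X)` modulo `V` (`central_part`), and this quotient is approximated by the quotient of the
Pell numbers `C = y_{2 X + 1}(aC)` and `J = y_{X+1}(aJ)` (`ratio_bound`). The index of `C` is pinned down
by the Lucas-Pell square conditions (`index_sound`), that of `J` by a congruence and its size
(`index_eq`), and `2 ^ (2 X + 1)` is identified by the congruence
`3 q C ≡ 2 (q ^ 2 - 1)` modulo `4 aC - 5` (`yn_two_pow`, `exp_unique`). Inequalities are
expressed by the solvability of a Pell equation `(4 R - 2) v ^ 2 + 1 = □` with `v ≠ 0`. In nine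
unknowns this gives five square conditions, one divisibility and one inequation (`Dat.Good`,
`bridge_sound`, `bridge_complete`).

**Combination.** Two further unknowns turn this system into one equation (`combine`). The product
over all signs of `t + Σ ± s i` is a polynomial `NP` in `t` and the squares `s i ^ 2`. If it vanishes
at suitable multiples of `A i * W ^ (2 i)`, then `Σ ± √(A i) * W ^ i` is rational, and
since the weights `W ^ i` grow rapidly, a Galois conjugation shows that every `√(A i)` is rational
(`isSquare_of_sum_rational`). The divisibility `S ∣ T` and the inequation `B ≠ 0` are put into `t`
by means of the fact that every `B ≠ 0` divides a number `(2 p + 1) (3 p + 1)`, whereas this product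
never vanishes.

**Degrees.** The coding produces degrees at most `202 * 5 ^ 59 + 400`, and the subsequent steps
multiply this by at most `32 * 10000`; the result is far below `eta 58 4`, whose leading
term is a multiple of `9 ^ 59`.
-/

open MvPolynomial

/-- `A ⊆ ℕ` is represented, with natural-number unknowns, by the polynomial
`P ∈ ℤ[x₀, x₁, …, x_ν]`, where `x₀` is reserved for the parameter. -/
def IsDiophantineOverNWith (A : Set ℕ) {ν : ℕ} (P : MvPolynomial (Fin (ν + 1)) ℤ) : Prop :=
  ∀ a : ℕ, a ∈ A ↔ ∃ z : Fin ν → ℕ,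
    eval (Fin.cases (a : ℤ) (fun i => (z i : ℤ)) : Fin (ν + 1) → ℤ) P = 0

/-- `A ⊆ ℕ` is represented, with integer unknowns, by the polynomial
`P ∈ ℤ[x₀, x₁, …, x_ν]`, where `x₀` is reserved for the parameter. -/
def IsDiophantineOverZWith (A : Set ℕ) {ν : ℕ} (P : MvPolynomial (Fin (ν + 1)) ℤ) : Prop :=
  ∀ a : ℕ, a ∈ A ↔ ∃ z : Fin ν → ℤ,
    eval (Fin.cases (a : ℤ) z : Fin (ν + 1) → ℤ) P = 0

/-- `A ⊆ ℕ` is Diophantine over ℕ. -/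
def IsDiophantineOverN (A : Set ℕ) : Prop :=
  ∃ (ν : ℕ) (P : MvPolynomial (Fin (ν + 1)) ℤ), IsDiophantineOverNWith A P

/-- `(ν, δ)` is a universal pair over ℕ. -/
def UniversalPairN (ν δ : ℕ) : Prop :=
  ∀ A : Set ℕ, IsDiophantineOverN A →
    ∃ P : MvPolynomial (Fin (ν + 1)) ℤ, P.totalDegree ≤ δ ∧ IsDiophantineOverNWith A P

/-- `(ν, δ)` is a universal pair over ℤ. -/
def UniversalPairZ (ν δ : ℕ) : Prop :=
  ∀ A : Set ℕ, IsDiophantineOverN A →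
    ∃ P : MvPolynomial (Fin (ν + 1)) ℤ, P.totalDegree ≤ δ ∧ IsDiophantineOverZWith A P

/-- The degree bound `η(ν, δ)`. -/
def eta (ν δ : ℕ) : ℕ :=
  15616 + 233856 * δ + 233952 * δ * (2 * δ + 1) ^ (ν + 1)
    + 467712 * δ ^ 2 * (2 * δ + 1) ^ (ν + 1)

/-! ### Pell sequences -/

namespace UPair

open Pell in
theorem pell_of_isSquare {a : ℕ} (a1 : 1 < a) {c : ℤ}
    (h : IsSquare (((a : ℤ) ^ 2 - 1) * c ^ 2 + 1)) :
    ∃ i, c.natAbs = yn a1 i ∧ ((a : ℤ) ^ 2 - 1) * c ^ 2 + 1 = (xn a1 i : ℤ) ^ 2 := by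
  obtain ⟨r, hr⟩ := h
  have hd : ((a * a - 1 : ℕ) : ℤ) = (a : ℤ) ^ 2 - 1 := by
    rw [Nat.cast_sub (by nlinarith)]; push_cast; ring
  have key : r.natAbs * r.natAbs - (a * a - 1) * c.natAbs * c.natAbs = 1 := by
    have h1 : r.natAbs * r.natAbs = (a * a - 1) * c.natAbs * c.natAbs + 1 := by
      zify
      rw [hd, abs_mul_abs_self, mul_assoc, abs_mul_abs_self, ← hr]; ring
    omega
  obtain ⟨i, hx, hy⟩ := Pell.eq_pell a1 key
  refine ⟨i, hy, ?_⟩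
  rw [hr, ← hx, Int.natCast_natAbs, sq_abs, sq]

open Pell in
theorem pell_eq_int {a : ℕ} (a1 : 1 < a) (i : ℕ) :
    ((a : ℤ) ^ 2 - 1) * (yn a1 i : ℤ) ^ 2 + 1 = (xn a1 i : ℤ) ^ 2 := by
  have h := Pell.pell_eqz a1 i
  rw [Pell.dz_val] at h
  simp only [Pell.az, Pell.xz, Pell.yz] at h
  linear_combination -h

open Pell in
theorem yn_modEq_int {a : ℕ} (a1 : 1 < a) (i : ℕ) : (a : ℤ) - 1 ∣ (yn a1 i : ℤ) - i := by
  have h := (Nat.modEq_iff_dvd.1 (Pell.yn_modEq_a_sub_one a1 i).symm)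
  rwa [Nat.cast_sub a1.le, Nat.cast_one] at h

open Pell in
theorem xn_two_mul {a : ℕ} (a1 : 1 < a) (i : ℕ) :
    (xn a1 (2 * i) : ℤ) = 2 * (xn a1 i : ℤ) ^ 2 - 1 := by
  have h1 := Pell.xn_add a1 i i
  have h2 := pell_eq_int a1 i
  have hd : ((a * a - 1 : ℕ) : ℤ) = (a : ℤ) ^ 2 - 1 := by
    rw [Nat.cast_sub (by nlinarith)]; push_cast; ring
  have h3 : Pell.xn a1 (i + i) = Pell.xn a1 i * Pell.xn a1 i
    + (a * a - 1) * Pell.yn a1 i * Pell.yn a1 i := h1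
  rw [two_mul, h3, Nat.cast_add, Nat.cast_mul, Nat.cast_mul, Nat.cast_mul, hd]
  linear_combination h2

/-- First half of the analysis of the Lucas-Pell system: every quantity is a Pell number, and the
indices `i` of `C` and `j` of `H` agree up to sign modulo `2 C`. -/
theorem index_aux {a : ℕ} (a1 : 1 < a) {C E F G H Z x : ℤ} (hC0 : C ≠ 0)
    (hD : IsSquare (((a : ℤ) ^ 2 - 1) * C ^ 2 + 1))
    (hE : E = 2 * C ^ 2 * x) (hx : x ≠ 0)
    (hFd : F = ((a : ℤ) ^ 2 - 1) * E ^ 2 + 1) (hF : IsSquare F)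
    (hG : G = a + F * (F - a))
    (hH : H = C + F * Z)
    (hI : IsSquare ((G ^ 2 - 1) * H ^ 2 + 1)) :
    ∃ i j : ℕ, 0 < i ∧ |C| = Pell.yn a1 i ∧ 2 * C ∣ |H| - j ∧ 2 * C ∣ F - 1 ∧
      (2 * C ∣ (j : ℤ) - i ∨ 2 * C ∣ (j : ℤ) + i) := by
  have ha : (1 : ℤ) < a := by exact_mod_cast a1
  obtain ⟨i, hCi, hxi⟩ := pell_of_isSquare a1 hD
  rw [hFd] at hF
  obtain ⟨n, hEn, hxn⟩ := pell_of_isSquare a1 hF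
  have hE0 : E ≠ 0 := by rw [hE]; positivity
  have hFx : F = (Pell.xn a1 n : ℤ) ^ 2 := by rw [hFd, hxn]
  have hFbig : (a : ℤ) ^ 2 ≤ F := by
    have : 0 < E ^ 2 := by positivity
    rw [hFd]; nlinarith
  have hGbig : 1 < G := by
    have : 0 < F - a := by nlinarith
    rw [hG]; nlinarith
  obtain ⟨g, rfl⟩ : ∃ g : ℕ, G = g := ⟨G.toNat, by omega⟩
  have g1 : 1 < g := by exact_mod_cast hGbig
  obtain ⟨j, hHj, hxj⟩ := pell_of_isSquare g1 hI
  have hFC : 2 * C ∣ F - 1 := by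
    rw [hFd, hE]; exact ⟨((a : ℤ) ^ 2 - 1) * 2 * C ^ 3 * x ^ 2, by ring⟩
  have hgF : F ∣ (g : ℤ) - a := by rw [hG]; exact ⟨F - a, by ring⟩
  have hxnF : (Pell.xn a1 n : ℤ) ∣ F := by rw [hFx, sq]; exact Dvd.intro _ rfl
  -- compare the doubled indices modulo `x_n(a)`
  have m1 : Pell.xn a1 (2 * j) ≡ Pell.xn a1 (2 * i) [MOD Pell.xn a1 n] := by
    have m2 : g ≡ a [MOD Pell.xn a1 n] := by
      apply Nat.ModEq.symm; rw [Nat.modEq_iff_dvd]; exact hxnF.trans hgF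
    have m3 := (Pell.xy_modEq_of_modEq g1 a1 m2 (2 * j)).1
    refine m3.symm.trans ?_
    apply Nat.ModEq.symm
    rw [Nat.modEq_iff_dvd, xn_two_mul, xn_two_mul, ← hxi, ← hxj]
    refine hxnF.trans ?_
    obtain ⟨u, hu⟩ := hgF
    refine ⟨2 * H ^ 2 * (u * (g + a)) + 2 * (a ^ 2 - 1) * (Z * (H + C)), ?_⟩
    have hH' : H - C = F * Z := by rw [hH]; ring
    linear_combination 2 * H ^ 2 * (g + a) * hu + 2 * (a ^ 2 - 1) * (H + C) * hH'
  have hyi : 0 < Pell.yn a1 i := by rw [← hCi]; exact Int.natAbs_pos.2 hC0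
  have hi0 : 0 < i := by
    rcases Nat.eq_zero_or_pos i with h0 | h0
    · rw [h0] at hyi; simp at hyi
    · exact h0
  have hyn : Pell.yn a1 i * Pell.yn a1 i ∣ Pell.yn a1 n := by
    rw [← hCi, ← hEn, ← Int.natAbs_mul]
    rw [Int.natAbs_dvd_natAbs, hE]; exact ⟨2 * x, by ring⟩
  have hin : Pell.yn a1 i ∣ n := Pell.dvd_of_ysq_dvd a1 hyn
  have hEpos : 0 < Pell.yn a1 n := by rw [← hEn]; exact Int.natAbs_pos.2 hE0
  have hn0 : 0 < n := by
    rcases Nat.eq_zero_or_pos n with h0 | h0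
    · rw [h0] at hEpos; simp at hEpos
    · exact h0
  -- `y_n` is a multiple of `2 y_i ^ 2`, so `n` exceeds `i`, and `i ∣ n`
  have hile : 2 * i ≤ n := by
    have hd : i ∣ n := by
      rw [← Pell.y_dvd_iff a1]; exact (Dvd.intro _ rfl).trans hyn
    have hne : n ≠ i := by
      intro hni
      have h1 : E.natAbs = 2 * C.natAbs ^ 2 * x.natAbs := by
        rw [hE, Int.natAbs_mul, Int.natAbs_mul, Int.natAbs_pow]; rfl
      have h2 : E.natAbs = C.natAbs := by rw [hEn, hCi, hni]
      have hx1 : 1 ≤ x.natAbs := Int.natAbs_pos.2 hx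
      have hC1 : 1 ≤ C.natAbs := Int.natAbs_pos.2 hC0
      have h3 : 2 * C.natAbs ^ 2 * 1 ≤ 2 * C.natAbs ^ 2 * x.natAbs := Nat.mul_le_mul_left _ hx1
      nlinarith
    obtain ⟨k, rfl⟩ := hd
    rcases k with _ | _ | k
    · simp at hn0
    · simp at hne
    · nlinarith
  have m4 := Pell.modEq_of_xn_modEq a1 (by omega : 0 < 2 * i) hile m1
  have hCabs : |C| = (Pell.yn a1 i : ℤ) := by rw [← hCi, Int.natCast_natAbs]
  refine ⟨i, j, hi0, hCabs, ?_, hFC, ?_⟩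
  · have h1 : 2 * C ∣ (g : ℤ) - 1 := by
      obtain ⟨k, hk⟩ := hFC
      refine ⟨k * (F + 1 - a), ?_⟩
      rw [hG]; linear_combination (F + 1 - a) * hk
    have := h1.trans (yn_modEq_int g1 j)
    rwa [← hHj, Int.natCast_natAbs] at this
  · obtain ⟨l, hl⟩ : C ∣ (n : ℤ) := by
      rw [← abs_dvd, hCabs]; exact_mod_cast hin
    rcases m4 with m | m
    · left
      obtain ⟨k, hk⟩ := (Nat.modEq_iff_dvd.1 m.symm)
      push_cast at hk
      refine ⟨l * k, ?_⟩
      have : 2 * ((j : ℤ) - i) = 2 * (2 * C * (l * k)) := by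
        linear_combination hk + 4 * k * hl
      linarith
    · right
      obtain ⟨k, hk⟩ := (Nat.modEq_iff_dvd.1 m.symm)
      push_cast at hk
      refine ⟨l * k, ?_⟩
      have : 2 * ((j : ℤ) + i) = 2 * (2 * C * (l * k)) := by
        linear_combination hk + 4 * k * hl
      linarith

/-- The Lucas-Pell system that pins down the index of a Pell number: if `C ≡ B` modulo `a - 1`,
and the three auxiliary quantities are squares, then `C = y_B(a)`. -/
theorem index_sound {a B : ℕ} (a1 : 1 < a) (hB : 0 < B) (hBa : 2 * B + 1 < a)
    {C E F G H h y x : ℤ} (hC : C = B + (a - 1) * h)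
    (hD : IsSquare (((a : ℤ) ^ 2 - 1) * C ^ 2 + 1))
    (hE : E = 2 * C ^ 2 * x) (hx : x ≠ 0)
    (hFd : F = ((a : ℤ) ^ 2 - 1) * E ^ 2 + 1) (hF : IsSquare F)
    (hG : G = a + F * (F - a))
    (hH : H = C + F * (B - C + 2 * C * y))
    (hI : IsSquare ((G ^ 2 - 1) * H ^ 2 + 1)) :
    C = Pell.yn a1 B := by
  have ha : (2 * B + 1 : ℤ) < a := by exact_mod_cast hBa
  have hB' : (0 : ℤ) < B := by exact_mod_cast hB
  have hCB : (B : ℤ) ≤ |C| := by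
    rcases lt_trichotomy h 0 with hh | hh | hh
    · have : ((a : ℤ) - 1) * h ≤ -(a - 1) := by nlinarith
      rw [hC]; refine le_trans ?_ (neg_le_abs _); linarith
    · rw [hC, hh]; simp
    · have : 0 ≤ ((a : ℤ) - 1) * h := by apply mul_nonneg <;> linarith
      rw [hC]; refine le_trans ?_ (le_abs_self _); linarith
  have hC0 : C ≠ 0 := by rintro rfl; simp at hCB; omega
  obtain ⟨i, j, hi0, hCabs, m7, hFC, m5⟩ := index_aux a1 hC0 hD hE hx hFd hF hG hH hI
  have m6 : 2 * C ∣ H - B := by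
    obtain ⟨k, hk⟩ := hFC
    exact ⟨y + k * (B - C + 2 * C * y), by rw [hH]; linear_combination (B - C + 2 * C * y) * hk⟩
  have hiy : (i : ℤ) ≤ |C| := by rw [hCabs]; exact_mod_cast Pell.yn_ge_n a1 i
  have hi0' : (0 : ℤ) < i := by exact_mod_cast hi0
  have key : 2 * C ∣ (B : ℤ) - i ∨ 2 * C ∣ (B : ℤ) + i := by
    obtain ⟨s, hs⟩ := m6
    rcases m7 with ⟨t, ht⟩
    rcases abs_choice H with hc | hc <;> rw [hc] at ht <;> rcases m5 with ⟨u, hu⟩ | ⟨u, hu⟩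
    · left; exact ⟨u + t - s, by linear_combination hu + ht - hs⟩
    · right; exact ⟨u + t - s, by linear_combination hu + ht - hs⟩
    · right; exact ⟨-(s + t + u), by linear_combination -hs - ht - hu⟩
    · left; exact ⟨-(s + t + u), by linear_combination -hs - ht - hu⟩
  have hBi : i = B := by
    have hpos : 0 < |C| := by positivity
    have key' : 2 * |C| ∣ (B : ℤ) - i ∨ 2 * |C| ∣ (B : ℤ) + i := by
      have h2 : 2 * |C| = |2 * C| := by rw [abs_mul]; simp
      rw [h2, abs_dvd, abs_dvd]; exact key
    rcases key' with k | k
    · have : (B : ℤ) - i = 0 := by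
        apply Int.eq_zero_of_abs_lt_dvd k
        rw [abs_lt]; constructor <;> linarith
      omega
    · obtain ⟨t, ht⟩ := k
      have ht1 : t = 1 := by
        have : 0 < t := by by_contra hc; push Not at hc; nlinarith
        have : t < 2 := by by_contra hc; push Not at hc; nlinarith
        omega
      rw [ht1] at ht
      have : (i : ℤ) = B := by linarith
      exact_mod_cast this
  rw [hBi] at hCabs
  rcases abs_choice C with hs | hs
  · rw [← hCabs, hs]
  · exfalso
    obtain ⟨s, h2⟩ := yn_modEq_int a1 B
    rw [← hCabs, hs] at h2
    have h3 : (a : ℤ) - 1 ∣ 2 * B := ⟨-h - s, by linear_combination -hC - h2⟩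
    have := Int.le_of_dvd (by omega) h3
    omega

/-- Conversely the Lucas-Pell system is solvable with `C = y_B(a)`. -/
theorem index_complete {a B : ℕ} (a1 : 1 < a) (hB : 0 < B) :
    ∃ h x y : ℤ, ∃ C E F G H : ℤ, C = Pell.yn a1 B ∧ C = B + (a - 1) * h ∧
      IsSquare (((a : ℤ) ^ 2 - 1) * C ^ 2 + 1) ∧ E = 2 * C ^ 2 * x ∧ x ≠ 0 ∧
      F = ((a : ℤ) ^ 2 - 1) * E ^ 2 + 1 ∧ IsSquare F ∧ G = a + F * (F - a) ∧
      H = C + F * (B - C + 2 * C * y) ∧ IsSquare ((G ^ 2 - 1) * H ^ 2 + 1) := by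
  obtain ⟨h, hh⟩ := yn_modEq_int a1 B
  set C := Pell.yn a1 B with hCdef
  have hCpos : 0 < C := lt_of_lt_of_le hB (Pell.yn_ge_n a1 B)
  obtain ⟨x, hx⟩ : 2 * (C * C) ∣ Pell.yn a1 (2 * (B * C)) := by
    have h1 : Pell.yn a1 (2 * (B * C)) = 2 * (Pell.xn a1 (B * C) * Pell.yn a1 (B * C)) := by
      rw [two_mul, Pell.yn_add]; ring
    rw [h1]
    exact mul_dvd_mul_left 2 (Dvd.dvd.mul_left (Pell.ysq_dvd_yy a1 B) _)
  set n := 2 * (B * C) with hn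
  have hn0 : 0 < n := by positivity
  have hx0 : x ≠ 0 := by
    rintro rfl
    have := Pell.strictMono_y a1 hn0
    simp [hx] at this
  set F : ℤ := ((a : ℤ) ^ 2 - 1) * (Pell.yn a1 n : ℤ) ^ 2 + 1 with hF
  have hy1 : (1 : ℤ) ≤ (Pell.yn a1 n : ℤ) := by
    have := Pell.strictMono_y a1 hn0
    simp at this; exact_mod_cast this
  have ha : (1 : ℤ) < a := by exact_mod_cast a1
  have hFbig : (a : ℤ) ^ 2 ≤ F := by
    have h1 : (1 : ℤ) ≤ (Pell.yn a1 n : ℤ) ^ 2 := one_le_pow₀ hy1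
    have h2 : (0 : ℤ) ≤ (a : ℤ) ^ 2 - 1 := by nlinarith
    have h3 := mul_le_mul_of_nonneg_left h1 h2
    rw [hF]; linarith
  have hGbig : 1 < (a : ℤ) + F * (F - a) := by
    have : 0 < F - a := by nlinarith
    nlinarith
  obtain ⟨g, hg⟩ : ∃ g : ℕ, (a : ℤ) + F * (F - a) = g := ⟨(_ : ℤ).toNat, (Int.toNat_of_nonneg (by linarith)).symm⟩
  have g1 : 1 < g := by rw [hg] at hGbig; exact_mod_cast hGbig
  have hE : (Pell.yn a1 n : ℤ) = 2 * (C : ℤ) ^ 2 * x := by rw [hx]; push_cast; ring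
  have hFC : 2 * (C : ℤ) ∣ F - 1 := by
    rw [hF, hE]; exact ⟨((a : ℤ) ^ 2 - 1) * 2 * C ^ 3 * x ^ 2, by ring⟩
  obtain ⟨s, hs⟩ : F ∣ (Pell.yn g1 B : ℤ) - C := by
    have hFn : (F.natAbs : ℤ) = F := by 
      rw [Int.natCast_natAbs, abs_of_nonneg]; linarith [sq_nonneg (a : ℤ)]
    have : a ≡ g [MOD F.natAbs] := by
      rw [Nat.modEq_iff_dvd, ← hg, hFn]; exact ⟨F - a, by ring⟩
    have := Nat.modEq_iff_dvd.1 (Pell.xy_modEq_of_modEq a1 g1 this B).2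
    rwa [hFn] at this
  obtain ⟨y, hy⟩ : 2 * (C : ℤ) ∣ s - (B - C) := by
    have h1 : 2 * (C : ℤ) ∣ (g : ℤ) - 1 := by
      obtain ⟨k, hk⟩ := hFC
      refine ⟨k * (F + 1 - a), ?_⟩
      rw [← hg]; linear_combination (F + 1 - a) * hk
    obtain ⟨u, hu⟩ := h1.trans (yn_modEq_int g1 B)
    obtain ⟨k, hk⟩ := hFC
    exact ⟨u - k * s, by linear_combination hu - hs - s * hk⟩
  refine ⟨h, x, y, C, Pell.yn a1 n, F, g, Pell.yn g1 B, rfl, by linear_combination hh, ?_, hE,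
    by exact_mod_cast hx0, hF, ?_, hg.symm, ?_, ?_⟩
  · rw [pell_eq_int]; exact IsSquare.sq _
  · rw [hF, pell_eq_int]; exact IsSquare.sq _
  · linear_combination hs + F * hy
  · rw [pell_eq_int]; exact IsSquare.sq _

theorem yn_succ_le {a : ℕ} (a1 : 1 < a) (n : ℕ) : Pell.yn a1 (n + 1) ≤ (2 * a) ^ n := by
  induction n with
  | zero => simp
  | succ n ih =>
    have := Pell.yn_succ_succ a1 n
    calc Pell.yn a1 (n + 2) ≤ 2 * a * Pell.yn a1 (n + 1) := by omega
      _ ≤ 2 * a * (2 * a) ^ n := Nat.mul_le_mul_left _ ih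
      _ = _ := by ring

theorem le_yn_succ {a : ℕ} (a1 : 1 < a) (n : ℕ) : (2 * a - 1) ^ n ≤ Pell.yn a1 (n + 1) := by
  induction n with
  | zero => simp
  | succ n ih =>
    have h := Pell.yn_succ_succ a1 n
    have h2 : Pell.yn a1 n ≤ Pell.yn a1 (n + 1) := (Pell.strictMono_y a1).monotone (by omega)
    have h3 : (2 * a - 1) * Pell.yn a1 (n + 1) ≤ Pell.yn a1 (n + 2) := by
      rw [Nat.sub_mul]; omega
    calc (2 * a - 1) ^ (n + 1) = (2 * a - 1) * (2 * a - 1) ^ n := by ring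
      _ ≤ (2 * a - 1) * Pell.yn a1 (n + 1) := Nat.mul_le_mul_left _ ih
      _ ≤ _ := h3

/-- With parameter `5/4` the Pell sequence is `y_n = (2 / 3) (2 ^ n - 2 ^ (-n))`, whence this
congruence. -/
theorem yn_two_pow {a : ℕ} (a1 : 1 < a) (n : ℕ) :
    (4 * (a : ℤ) - 5) ∣ 3 * 2 ^ n * (Pell.yn a1 n : ℤ) - 2 * (4 ^ n - 1) := by
  induction n using Nat.twoStepInduction with
  | zero => simp
  | one => simp
  | more n h0 h1 =>
    have h : (Pell.yn a1 (n + 2) : ℤ) = 2 * a * Pell.yn a1 (n + 1) - Pell.yn a1 n := by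
      have := Pell.yn_succ_succ a1 n; zify at this; linarith
    obtain ⟨k0, h0⟩ := h0
    obtain ⟨k1, h1⟩ := h1
    refine ⟨3 * 2 ^ (n + 1) * Pell.yn a1 (n + 1) + 5 * k1 - 4 * k0, ?_⟩
    rw [h]
    linear_combination 5 * h1 - 4 * h0

end UPair

/-! ### Binary digit sums and central binomial coefficients -/

namespace UPair

/-- The number of ones in the binary expansion of `n`. -/
def pop (n : ℕ) : ℕ := (Nat.digits 2 n).sum

theorem pop_step (n : ℕ) : pop n = n % 2 + pop (n / 2) := by
  unfold pop
  rcases Nat.eq_zero_or_pos n with rfl | h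
  · simp
  · rw [Nat.digits_def' (by norm_num) h]; simp

@[simp] theorem pop_zero : pop 0 = 0 := by simp [pop]

theorem pop_shift (h m l : ℕ) (hl : l < 2 ^ m) : pop (h * 2 ^ m + l) = pop h + pop l := by
  induction m generalizing l with
  | zero => obtain rfl : l = 0 := by simpa using hl
            simp
  | succ m ih =>
    have e0 : h * 2 ^ (m + 1) = 2 * (h * 2 ^ m) := by ring
    have e1 : (h * 2 ^ (m + 1) + l) % 2 = l % 2 := by omega
    have e2 : (h * 2 ^ (m + 1) + l) / 2 = h * 2 ^ m + l / 2 := by omega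
    rw [pop_step (h * 2 ^ (m + 1) + l), e1, e2, ih (l / 2) (by rw [pow_succ] at hl; omega),
      pop_step l]
    omega

theorem pop_compl (m l : ℕ) (hl : l < 2 ^ m) : pop (2 ^ m - 1 - l) + pop l = m := by
  induction m generalizing l with
  | zero => obtain rfl : l = 0 := by simpa using hl
            simp
  | succ m ih =>
    rw [pow_succ] at hl ⊢
    have h2 : 0 < 2 ^ m := by positivity
    have e2 : (2 ^ m * 2 - 1 - l) / 2 = 2 ^ m - 1 - l / 2 := by omega
    rw [pop_step (2 ^ m * 2 - 1 - l), pop_step l, e2]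
    have := ih (l / 2) (by omega)
    omega

theorem pop_add_aux (S T : ℕ) :
    pop (S + T) ≤ pop S + pop T ∧ (pop (S + T) = pop S + pop T ↔ S &&& T = 0) := by
  induction S using Nat.strongRecOn generalizing T with
  | ind S ih =>
    rcases Nat.eq_zero_or_pos S with rfl | hS
    · simp
    have hsucc : ∀ n, pop (n + 1) ≤ pop n + 1 := by
      intro n
      induction n using Nat.strongRecOn with
      | ind n ihn =>
        rw [pop_step (n + 1), pop_step n]
        rcases Nat.mod_two_eq_zero_or_one n with h | h
        · rw [show (n + 1) / 2 = n / 2 by omega]; omega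
        · have := ihn (n / 2) (by omega)
          rw [show (n + 1) / 2 = n / 2 + 1 by omega]; omega
    have hand : S &&& T = 0 ↔ ((S / 2) &&& (T / 2) = 0 ∧ ¬ (S % 2 = 1 ∧ T % 2 = 1)) := by
      have h1 : (S &&& T) / 2 = (S / 2) &&& (T / 2) := Nat.and_div_two
      have h2 : (S &&& T) % 2 = 1 ↔ S % 2 = 1 ∧ T % 2 = 1 := by
        simp [Nat.and_mod_two_eq_one]
      rw [← h1, ← h2]; omega
    have := ih (S / 2) (by omega) (T / 2)
    rw [hand, pop_step (S + T), pop_step S, pop_step T, ← this.2]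
    have h1 := this.1
    by_cases hc : S % 2 = 1 ∧ T % 2 = 1
    · have h3 := hsucc (S / 2 + T / 2)
      rw [show (S + T) / 2 = S / 2 + T / 2 + 1 by omega]
      omega
    · rw [show (S + T) / 2 = S / 2 + T / 2 by omega]
      omega

/-- Legendre formula: the exponent of `2` in a central binomial coefficient is a digit sum. -/
theorem pop_choose (X k : ℕ) : 2 ^ k ∣ (2 * X).choose X ↔ k ≤ pop X := by
  have : Fact (Nat.Prime 2) := ⟨Nat.prime_two⟩
  have h := sub_one_mul_padicValNat_choose_eq_sub_sum_digits' (p := 2) (k := X) (n := X)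
  have h2 : pop (X + X) = pop X := by
    rw [pop_step (X + X)]; rw [show (X + X) / 2 = X by omega]; omega
  have h3 : padicValNat 2 ((2 * X).choose X) = pop X := by
    unfold pop at *
    rw [h2] at h
    rw [two_mul]; omega
  rw [← h3, padicValNat_dvd_iff_le]
  exact (Nat.choose_pos (by omega)).ne'

/-- Absence of common binary digits is a divisibility condition on one central binomial
coefficient. -/
theorem and_eq_zero_iff (n S T N : ℕ) (hN : N = 2 ^ n) (hS : S < N) (hT : T < N) :
    N ^ 2 ∣ (2 * ((S + T) * N ^ 2 + (N ^ 2 - 1 - S * N - T))).choose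
      ((S + T) * N ^ 2 + (N ^ 2 - 1 - S * N - T)) ↔ S &&& T = 0 := by
  have hlt : S * N + T < N ^ 2 := by nlinarith
  have hN2 : N ^ 2 = 2 ^ (2 * n) := by rw [hN, ← pow_mul]; ring_nf
  have h1 := pop_shift (S + T) (2 * n) (N ^ 2 - 1 - S * N - T) (by rw [← hN2]; omega)
  have h2 := pop_compl (2 * n) (S * N + T) (by rw [← hN2]; exact hlt)
  have h3 := pop_shift S n T (by rw [← hN]; exact hT)
  rw [← hN2] at h1 h2
  rw [← hN] at h3
  rw [← Nat.sub_sub] at h2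
  have h4 := pop_add_aux S T
  rw [← h4.2]
  nth_rewrite 1 [hN2]
  rw [pop_choose, h1]
  omega

end UPair

/-! ### Binary masks and digits -/

namespace UPair

theorem and_shift (m h h' l l' : ℕ) (hl : l < 2 ^ m) (hl' : l' < 2 ^ m) :
    (h * 2 ^ m + l) &&& (h' * 2 ^ m + l') = 0 ↔ h &&& h' = 0 ∧ l &&& l' = 0 := by
  have hand : ∀ S T : ℕ, S &&& T = 0 ↔ ((S / 2) &&& (T / 2) = 0 ∧ ¬ (S % 2 = 1 ∧ T % 2 = 1)) := by
    intro S T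
    have h1 : (S &&& T) / 2 = (S / 2) &&& (T / 2) := Nat.and_div_two
    have h2 : (S &&& T) % 2 = 1 ↔ S % 2 = 1 ∧ T % 2 = 1 := by
      simp [Nat.and_mod_two_eq_one]
    rw [← h1, ← h2]; omega
  induction m generalizing l l' with
  | zero =>
    obtain rfl : l = 0 := by simpa using hl
    obtain rfl : l' = 0 := by simpa using hl'
    simp
  | succ m ih =>
    have e0 : ∀ h, h * 2 ^ (m + 1) = 2 * (h * 2 ^ m) := by intro h; ring
    have e1 : ∀ h l : ℕ, (h * 2 ^ (m + 1) + l) % 2 = l % 2 := by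
      intro h l; have := e0 h; omega
    have e2 : ∀ h l : ℕ, (h * 2 ^ (m + 1) + l) / 2 = h * 2 ^ m + l / 2 := by
      intro h l; have := e0 h; omega
    rw [pow_succ] at hl hl'
    have h3 : _ ↔ _ := ih (l / 2) (l' / 2) (by omega) (by omega)
    rw [hand, e1, e1, e2, e2, h3, hand l l']
    tauto

theorem and_high_mask (w u t : ℕ) (hu : u ≤ w) (ht : t < 2 ^ w) :
    t &&& (2 ^ w - 2 ^ u) = 0 ↔ t < 2 ^ u := by
  have hw : 2 ^ w = 2 ^ (w - u) * 2 ^ u := by rw [← pow_add]; congr 1; omega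
  have h1 : 2 ^ w - 2 ^ u = (2 ^ (w - u) - 1) * 2 ^ u + 0 := by
    rw [Nat.sub_mul, ← hw]; simp
  have h2 : t = (t / 2 ^ u) * 2 ^ u + t % 2 ^ u := (Nat.div_add_mod' _ _).symm
  have h3 : t / 2 ^ u < 2 ^ (w - u) := by
    rw [Nat.div_lt_iff_lt_mul (by positivity), ← hw]; exact ht
  rw [h1]
  nth_rewrite 1 [h2]
  rw [and_shift u _ _ _ _ (Nat.mod_lt _ (by positivity)) (by positivity),
    Nat.and_two_pow_sub_one_eq_mod, Nat.mod_eq_of_lt h3]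
  simp

theorem sum_lt_pow (Q : ℕ) (nn z : ℕ → ℕ) (hnn : StrictMono nn) (hz : ∀ s, z s < Q)
    (k L : ℕ) (hL : ∀ s < k, nn s < L) : ∑ s ∈ Finset.range k, z s * Q ^ nn s < Q ^ L := by
  have hQ : 0 < Q := lt_of_le_of_lt (Nat.zero_le _) (hz 0)
  induction k generalizing L with
  | zero => simpa using pow_pos hQ L
  | succ k ih =>
    rw [Finset.sum_range_succ]
    have h1 := ih (nn k) (fun s hs => hnn hs)
    have h2 : z k * Q ^ nn k + Q ^ nn k ≤ Q * Q ^ nn k := by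
      rw [← Nat.succ_mul]; exact Nat.mul_le_mul_right _ (hz k)
    have h3 : Q * Q ^ nn k ≤ Q ^ L := by
      rw [← pow_succ']; exact Nat.pow_le_pow_right hQ (hL k (Nat.lt_succ_self k))
    omega

/-- A number has only digits below `2 ^ u`, in the positions `nn s`, iff it has no common binary
digit with the complement of the corresponding mask. -/
theorem mask_iff (t u : ℕ) (hut : u ≤ t) (nn : ℕ → ℕ) (hnn : StrictMono nn)
    (k L : ℕ) (hL : ∀ s < k, nn s < L) (g : ℕ) (hg : g < (2 ^ t) ^ L) :
    g &&& ((2 ^ t) ^ L - 1 - ∑ s ∈ Finset.range k, (2 ^ u - 1) * (2 ^ t) ^ nn s) = 0 ↔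
      ∃ z : ℕ → ℕ, (∀ s, z s < 2 ^ u) ∧ g = ∑ s ∈ Finset.range k, z s * (2 ^ t) ^ nn s := by
  have hut' : 2 ^ u ≤ 2 ^ t := Nat.pow_le_pow_right (by norm_num) hut
  have hu0 : 0 < 2 ^ u := by positivity
  induction k generalizing L g with
  | zero =>
    simp only [Finset.range_zero, Finset.sum_empty, Nat.sub_zero]
    rw [← pow_mul] at hg ⊢
    rw [Nat.and_two_pow_sub_one_eq_mod, Nat.mod_eq_of_lt hg]
    exact ⟨fun h => ⟨fun _ => 0, by simp, h⟩, fun h => h.choose_spec.2⟩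
  | succ k ih =>
    have hLk : nn k < L := hL k (Nat.lt_succ_self k)
    set Q := (2 ^ t) ^ nn k with hQ
    have hQ' : Q = 2 ^ (t * nn k) := by rw [hQ, pow_mul]
    have hQ0 : 0 < Q := by rw [hQ]; positivity
    have hLQ : (2 ^ t) ^ L = 2 ^ (t * (L - nn k)) * Q := by
      rw [hQ', ← pow_mul, ← pow_add, ← Nat.mul_add]; congr 2; omega
    have hmid : g % Q < Q := Nat.mod_lt _ hQ0
    have htop : g / Q < 2 ^ (t * (L - nn k)) := by
      rw [Nat.div_lt_iff_lt_mul hQ0, ← hLQ]; exact hg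
    have hdiv : g = (g / Q) * Q + g % Q := (Nat.div_add_mod' _ _).symm
    set Zk := ∑ s ∈ Finset.range k, (2 ^ u - 1) * (2 ^ t) ^ nn s with hZk
    have hZlt : Zk < Q :=
      sum_lt_pow (2 ^ t) nn (fun _ => 2 ^ u - 1) hnn (fun _ => by omega) k (nn k)
        (fun s hs => hnn hs)
    have hle : u ≤ t * (L - nn k) := by
      refine hut.trans (Nat.le_mul_of_pos_right t (by omega))
    have hcomp : (2 ^ t) ^ L - 1 - ∑ s ∈ Finset.range (k + 1), (2 ^ u - 1) * (2 ^ t) ^ nn s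
        = (2 ^ (t * (L - nn k)) - 2 ^ u) * Q + (Q - 1 - Zk) := by
      rw [Finset.sum_range_succ, ← hZk, ← hQ, hLQ, Nat.sub_mul, Nat.sub_mul]
      have : 2 ^ u * Q ≤ 2 ^ (t * (L - nn k)) * Q :=
        Nat.mul_le_mul_right _ (Nat.pow_le_pow_right (by norm_num) hle)
      have : 1 * Q ≤ 2 ^ u * Q := Nat.mul_le_mul_right _ hu0
      omega
    have h3 : _ ↔ _ := ih (nn k) (fun s hs => hnn hs) (g % Q) hmid
    rw [hcomp]
    nth_rewrite 1 [hdiv]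
    rw [hQ', and_shift _ _ _ _ _ (by rw [← hQ']; exact hmid) (by rw [← hQ']; omega), ← hQ',
      and_high_mask _ _ _ hle htop, h3]
    constructor
    · rintro ⟨h1, z, hz, hzg⟩
      refine ⟨fun s => if s < k then z s else g / Q, ?_, ?_⟩
      · intro s; dsimp only; split_ifs
        · exact hz s
        · exact h1
      · rw [Finset.sum_range_succ]
        rw [Finset.sum_congr rfl (g := fun s => z s * (2 ^ t) ^ nn s), ← hzg]
        · dsimp only; rw [if_neg (lt_irrefl k), ← hQ]; omega
        · intro s hs; dsimp only; rw [if_pos (Finset.mem_range.1 hs)]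
    · rintro ⟨z, hz, hzg⟩
      rw [Finset.sum_range_succ, ← hQ] at hzg
      have hlt := sum_lt_pow (2 ^ t) nn z hnn (fun s => (hz s).trans_le hut') k (nn k)
        (fun s hs => hnn hs)
      rw [← hQ] at hlt
      have e1 : g / Q = z k := by
        rw [hzg, Nat.add_mul_div_right _ _ hQ0, Nat.div_eq_of_lt hlt, zero_add]
      have e2 : g % Q = ∑ s ∈ Finset.range k, z s * (2 ^ t) ^ nn s := by
        rw [hzg, Nat.add_mul_mod_self_right, Nat.mod_eq_of_lt hlt]
      exact ⟨e1 ▸ hz k, z, hz, e2⟩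

/-- Isolating the digit `d m` of a number given by its expansion in base `Q`. -/
theorem digit_extract (Q : ℤ) (hQ : 0 < Q) (d : ℕ → ℤ) (hd : ∀ j, 0 ≤ d j ∧ d j < Q) (m D : ℕ)
    (hm : m < D) : ∃ q r : ℤ, 0 ≤ q ∧ 0 ≤ r ∧ r < Q ^ m ∧
      ∑ j ∈ Finset.range D, d j * Q ^ j = (d m + Q * q) * Q ^ m + r := by
  have hlow : ∀ m : ℕ, 0 ≤ ∑ j ∈ Finset.range m, d j * Q ^ j ∧
      ∑ j ∈ Finset.range m, d j * Q ^ j < Q ^ m := by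
    intro m
    induction m with
    | zero => simp
    | succ m ih =>
      rw [Finset.sum_range_succ]
      have hp : 0 < Q ^ m := pow_pos hQ m
      have h1 : 0 ≤ d m * Q ^ m := mul_nonneg (hd m).1 hp.le
      have h2 : (d m + 1) * Q ^ m ≤ Q * Q ^ m :=
        mul_le_mul_of_nonneg_right (by have := (hd m).2; omega) hp.le
      rw [pow_succ']
      constructor <;> nlinarith
  induction D, hm using Nat.le_induction with
  | base =>
    refine ⟨0, _, le_rfl, (hlow m).1, (hlow m).2, ?_⟩
    rw [Finset.sum_range_succ]; ring
  | succ D hD ih =>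
    obtain ⟨q, r, hq, hr, hr', h⟩ := ih
    refine ⟨q + d D * Q ^ (D - (m + 1)), r, ?_, hr, hr', ?_⟩
    · have := (hd D).1; positivity
    · rw [Finset.sum_range_succ, h]
      have : Q ^ D = Q * Q ^ (D - (m + 1)) * Q ^ m := by
        rw [← pow_succ', ← pow_add]; congr 1; omega
      rw [this]; ring

end UPair

/-! ### Encoding a polynomial in one large coefficient -/

namespace UPair

/-- The exponent `∑ iₛ (δ + 1) ^ s` attached to the multi-index `i` by Kronecker substitution. -/
def ex (ν δ : ℕ) (i : Fin (ν + 1) →₀ ℕ) : ℕ := ∑ s, i s * (δ + 1) ^ (s : ℕ)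

/-- The multinomial expansion `(1 + ∑ xₛ) ^ δ`. -/
noncomputable def mu (ν δ : ℕ) : MvPolynomial (Fin (ν + 1)) ℤ := (1 + ∑ s, X s) ^ δ

/-- The product of all multinomial coefficients other than that of `i`. -/
noncomputable def wt (ν δ : ℕ) (i : Fin (ν + 1) →₀ ℕ) : ℤ :=
  ∏ j ∈ (mu ν δ).support.erase i, coeff j (mu ν δ)

/-- The coding polynomial attached to `P`: up to constants, `P` with its coefficients placed at the
exponents complementary to those of `mu`. -/
noncomputable def cbar {ν : ℕ} (δ : ℕ) (P : MvPolynomial (Fin (ν + 1)) ℤ) (Q : ℤ) : ℤ :=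
  ∑ i ∈ P.support, coeff i P * wt ν δ i * Q ^ ((δ + 1) ^ (ν + 1) - ex ν δ i)

/-- The sum of the absolute values of the coefficients of `cbar`. -/
noncomputable def lam {ν : ℕ} (δ : ℕ) (P : MvPolynomial (Fin (ν + 1)) ℤ) : ℤ :=
  ∑ i ∈ P.support, |coeff i P * wt ν δ i|

theorem mu_coeff (ν δ : ℕ) : ∀ i : Fin (ν + 1) →₀ ℕ,
    0 ≤ coeff i (mu ν δ) ∧ (∑ s, i s ≤ δ → 0 < coeff i (mu ν δ)) := by
  induction δ with
  | zero =>
    intro i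
    simp only [mu, pow_zero, coeff_one]
    refine ⟨by split_ifs <;> norm_num, fun h => ?_⟩
    have : 0 = i := by
      ext s
      have := Finset.single_le_sum (f := fun s => i s) (fun _ _ => Nat.zero_le _)
        (Finset.mem_univ s)
      have h2 : i s = 0 := by omega
      simp [h2]
    simp [this]
  | succ δ ih =>
    intro i
    have hmu : mu ν (δ + 1) = mu ν δ + ∑ s, mu ν δ * X s := by
      rw [← Finset.mul_sum]; simp only [mu]; ring
    have hc : coeff i (mu ν (δ + 1)) = coeff i (mu ν δ) +
        ∑ s, if s ∈ i.support then coeff (i - Finsupp.single s 1) (mu ν δ) else 0 := by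
      rw [hmu, coeff_add, coeff_sum]
      simp only [coeff_mul_X']
    have hnn : ∀ s ∈ Finset.univ, (0 : ℤ) ≤
        if s ∈ i.support then coeff (i - Finsupp.single s 1) (mu ν δ) else 0 := by
      intro s _
      split_ifs
      · exact (ih _).1
      · exact le_rfl
    rw [hc]
    refine ⟨add_nonneg (ih i).1 (Finset.sum_nonneg hnn), fun h => ?_⟩
    by_cases h0 : i = 0
    · exact add_pos_of_pos_of_nonneg ((ih i).2 (by simp [h0])) (Finset.sum_nonneg hnn)
    · obtain ⟨s, hs⟩ := Finsupp.support_nonempty_iff.2 h0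
      refine add_pos_of_nonneg_of_pos (ih i).1 (Finset.sum_pos' hnn ⟨s, Finset.mem_univ s, ?_⟩)
      rw [if_pos hs]
      refine (ih _).2 ?_
      have hle : Finsupp.single s 1 ≤ i := by
        rw [Finsupp.single_le_iff]
        exact Nat.one_le_iff_ne_zero.2 (Finsupp.mem_support_iff.1 hs)
      have h1 : ∑ t, i t = ∑ t, (i - Finsupp.single s 1 : Fin (ν + 1) →₀ ℕ) t
          + ∑ t, (Finsupp.single s 1 : Fin (ν + 1) →₀ ℕ) t := by
        rw [← Finset.sum_add_distrib]
        refine Finset.sum_congr rfl fun t _ => ?_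
        rw [← Finsupp.add_apply, tsub_add_cancel_of_le hle]
      have h2 : ∑ t, (Finsupp.single s 1 : Fin (ν + 1) →₀ ℕ) t = 1 := by
        simp [Finsupp.single_apply]
      omega

theorem mem_mu_support {ν δ : ℕ} {i : Fin (ν + 1) →₀ ℕ} :
    i ∈ (mu ν δ).support ↔ ∑ s, i s ≤ δ := by
  constructor
  · intro h
    have h1 := le_totalDegree h
    have h2 : (mu ν δ).totalDegree ≤ δ := by
      refine (totalDegree_pow _ _).trans ?_
      have : (1 + ∑ s : Fin (ν + 1), X s : MvPolynomial (Fin (ν + 1)) ℤ).totalDegree ≤ 1 := by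
        refine (totalDegree_add _ _).trans ?_
        simp only [totalDegree_one, zero_le, max_eq_right]
        refine (totalDegree_finsetSum _ _).trans ?_
        simp
      nlinarith
    rw [Finsupp.sum_fintype _ _ (fun _ => rfl)] at h1
    omega
  · intro h
    rw [mem_support_iff]
    exact ((mu_coeff ν δ i).2 h).ne'

theorem mem_support_sum_le {ν δ : ℕ} {P : MvPolynomial (Fin (ν + 1)) ℤ} (hP : P.totalDegree ≤ δ)
    {i : Fin (ν + 1) →₀ ℕ} (hi : i ∈ P.support) : ∑ s, i s ≤ δ := by
  have h1 := le_totalDegree hi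
  rw [Finsupp.sum_fintype _ _ (fun _ => rfl)] at h1
  omega

theorem ex_eq {ν δ : ℕ} {i : Fin (ν + 1) →₀ ℕ} (hi : ∑ s, i s ≤ δ) :
    ∃ f : Fin (ν + 1) → Fin (δ + 1), (∀ s, (f s : ℕ) = i s) ∧
      ex ν δ i = (finFunctionFinEquiv f : ℕ) := by
  have h : ∀ s, i s < δ + 1 := by
    intro s
    have := Finset.single_le_sum (f := fun s => i s) (fun _ _ => Nat.zero_le _)
      (Finset.mem_univ s)
    omega
  exact ⟨fun s => ⟨i s, h s⟩, fun s => rfl, by rw [finFunctionFinEquiv_apply]; rfl⟩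

theorem ex_lt {ν δ : ℕ} {i : Fin (ν + 1) →₀ ℕ} (hi : ∑ s, i s ≤ δ) :
    ex ν δ i < (δ + 1) ^ (ν + 1) := by
  obtain ⟨f, -, h⟩ := ex_eq hi
  rw [h]; exact Fin.is_lt _

theorem ex_inj {ν δ : ℕ} {i j : Fin (ν + 1) →₀ ℕ} (hi : ∑ s, i s ≤ δ) (hj : ∑ s, j s ≤ δ)
    (h : ex ν δ i = ex ν δ j) : i = j := by
  obtain ⟨f, hf, h1⟩ := ex_eq hi
  obtain ⟨g, hg, h2⟩ := ex_eq hj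
  have : f = g := finFunctionFinEquiv.injective (Fin.ext (by rw [← h1, ← h2, h]))
  ext s
  rw [← hf, ← hg, this]

/-- The contribution of the pair of multi-indices `p` to the product of `(1 + ∑ zₛ Q ^ nₛ) ^ δ` and
`cbar`. -/
noncomputable def term {ν : ℕ} (δ : ℕ) (P : MvPolynomial (Fin (ν + 1)) ℤ) (z : Fin (ν + 1) → ℤ)
    (p : (Fin (ν + 1) →₀ ℕ) × (Fin (ν + 1) →₀ ℕ)) : ℤ :=
  (coeff p.1 (mu ν δ) * ∏ s, z s ^ p.1 s) * (coeff p.2 P * wt ν δ p.2)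

/-- The exponent at which `term` is placed. -/
def tex (ν δ : ℕ) (p : (Fin (ν + 1) →₀ ℕ) × (Fin (ν + 1) →₀ ℕ)) : ℕ :=
  ex ν δ p.1 + ((δ + 1) ^ (ν + 1) - ex ν δ p.2)

/-- The coefficient of `Q ^ m` in the product of `(1 + ∑ zₛ Q ^ nₛ) ^ δ` and `cbar`. -/
noncomputable def acoeff {ν : ℕ} (δ : ℕ) (P : MvPolynomial (Fin (ν + 1)) ℤ) (z : Fin (ν + 1) → ℤ)
    (m : ℕ) : ℤ :=
  ∑ p ∈ ((mu ν δ).support ×ˢ P.support) with tex ν δ p = m, term δ P z p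

theorem expand {ν δ : ℕ} {P : MvPolynomial (Fin (ν + 1)) ℤ} (z : Fin (ν + 1) → ℤ)
    (Q : ℤ) (D : ℕ) (hD : 2 * (δ + 1) ^ (ν + 1) ≤ D) :
    (1 + ∑ s, z s * Q ^ (δ + 1) ^ (s : ℕ)) ^ δ * cbar δ P Q
      = ∑ j ∈ Finset.range D, acoeff δ P z j * Q ^ j := by
  have h1 : (1 + ∑ s, z s * Q ^ (δ + 1) ^ (s : ℕ)) ^ δ
      = ∑ i ∈ (mu ν δ).support, coeff i (mu ν δ) * (∏ s, z s ^ i s) * Q ^ ex ν δ i := by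
    have : (1 + ∑ s, z s * Q ^ (δ + 1) ^ (s : ℕ)) ^ δ
        = eval (fun s : Fin (ν + 1) => z s * Q ^ (δ + 1) ^ (s : ℕ)) (mu ν δ) := by
      simp [mu]
    rw [this, eval_eq']
    refine Finset.sum_congr rfl fun i _ => ?_
    simp only [mul_pow, Finset.prod_mul_distrib, ex, ← pow_mul, Finset.prod_pow_eq_pow_sum]
    rw [mul_assoc]; congr 3
    exact Finset.sum_congr rfl fun s _ => by ring
  rw [h1, cbar, Finset.sum_mul_sum, ← Finset.sum_product',
    ← Finset.sum_fiberwise_of_maps_to (t := Finset.range D) (g := tex ν δ)]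
  · refine Finset.sum_congr rfl fun j _ => ?_
    rw [acoeff, Finset.sum_mul]
    refine Finset.sum_congr rfl fun p hp => ?_
    rw [← (Finset.mem_filter.1 hp).2, term, tex, pow_add]
    ring
  · intro p hp
    rw [Finset.mem_product] at hp
    have := ex_lt (mem_mu_support.1 hp.1)
    rw [Finset.mem_range, tex]
    omega

/-- The exponents are chosen so that the value of `P`, up to a nonzero factor, is the coefficient in
position `(δ + 1) ^ (ν + 1)`. -/
theorem acoeff_main {ν δ : ℕ} {P : MvPolynomial (Fin (ν + 1)) ℤ} (hP : P.totalDegree ≤ δ)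
    (z : Fin (ν + 1) → ℤ) :
    ∃ R : ℤ, R ≠ 0 ∧ acoeff δ P z ((δ + 1) ^ (ν + 1)) = R * eval z P := by
  refine ⟨∏ j ∈ (mu ν δ).support, coeff j (mu ν δ),
    Finset.prod_ne_zero_iff.2 fun j hj => mem_support_iff.1 hj, ?_⟩
  rw [acoeff, eval_eq', Finset.mul_sum]
  symm
  refine Finset.sum_bij (fun i _ => (i, i)) ?_ ?_ ?_ ?_
  · intro i hi
    have h := mem_support_sum_le hP hi
    rw [Finset.mem_filter, Finset.mem_product]
    refine ⟨⟨mem_mu_support.2 h, hi⟩, ?_⟩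
    have := ex_lt h
    simp only [tex]; omega
  · intro i _ j _ h; exact congrArg Prod.fst h
  · rintro ⟨i, j⟩ hp
    rw [Finset.mem_filter, Finset.mem_product] at hp
    obtain ⟨⟨h1, h2⟩, h3⟩ := hp
    have hj := mem_support_sum_le hP h2
    have := ex_lt hj
    simp only [tex] at h3 h1 this ⊢
    have : i = j := ex_inj (mem_mu_support.1 h1) hj (by omega)
    exact ⟨j, h2, by rw [this]⟩
  · intro i hi
    have h := mem_mu_support.2 (mem_support_sum_le hP hi)
    rw [← Finset.mul_prod_erase _ _ h, term, wt]
    ring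

theorem acoeff_le {ν δ : ℕ} {P : MvPolynomial (Fin (ν + 1)) ℤ}
    (z : Fin (ν + 1) → ℤ) (hz : ∀ s, 0 ≤ z s) (m : ℕ) :
    |acoeff δ P z m| ≤ (1 + ∑ s, z s) ^ δ * lam δ P := by
  have h1 : (1 + ∑ s, z s) ^ δ = ∑ i ∈ (mu ν δ).support, coeff i (mu ν δ) * ∏ s, z s ^ i s := by
    rw [← eval_eq']; simp [mu]
  rw [h1, lam, Finset.sum_mul_sum, ← Finset.sum_product', acoeff]
  refine (Finset.abs_sum_le_sum_abs _ _).trans ?_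
  refine (Finset.sum_le_sum_of_subset_of_nonneg (Finset.filter_subset _ _)
    fun _ _ _ => abs_nonneg _).trans (le_of_eq ?_)
  refine Finset.sum_congr rfl fun p _ => ?_
  rw [term, abs_mul, abs_of_nonneg]
  exact mul_nonneg (mu_coeff ν δ _).1 (Finset.prod_nonneg fun s _ => pow_nonneg (hz s) _)

theorem cbar_le {ν δ : ℕ} {P : MvPolynomial (Fin (ν + 1)) ℤ} (Q : ℤ) (hQ : 1 ≤ Q) :
    |cbar δ P Q| ≤ lam δ P * Q ^ (δ + 1) ^ (ν + 1) := by
  rw [cbar, lam, Finset.sum_mul]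
  refine (Finset.abs_sum_le_sum_abs _ _).trans (Finset.sum_le_sum fun i _ => ?_)
  rw [abs_mul, abs_of_nonneg (pow_nonneg (by omega : (0 : ℤ) ≤ Q) _)]
  exact mul_le_mul_of_nonneg_left (pow_le_pow_right₀ hQ (Nat.sub_le _ _)) (abs_nonneg _)

end UPair

/-! ### The coding theorem -/

namespace UPair

/-- Half of the base of the number system used for the coding; a fixed power of two times
`(β ^ 2) ^ δ`, which exceeds all the coefficients that occur. -/
noncomputable def cH {ν : ℕ} (δ : ℕ) (P : MvPolynomial (Fin (ν + 1)) ℤ) (β : ℤ) : ℤ :=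
  2 ^ ((ν + 2) ^ δ * (lam δ P).toNat + 1) * (β ^ 2) ^ δ

/-- The base of the number system used for the coding. -/
noncomputable def cQ {ν : ℕ} (δ : ℕ) (P : MvPolynomial (Fin (ν + 1)) ℤ) (β : ℤ) : ℤ :=
  2 * cH δ P β

/-- The bound for the code `g` of the unknowns. -/
noncomputable def cN0 {ν : ℕ} (δ : ℕ) (P : MvPolynomial (Fin (ν + 1)) ℤ) (β : ℤ) : ℤ :=
  cQ δ P β ^ ((δ + 1) ^ ν + 1)

/-- The mask with the digit `β ^ 2 - 1` in each position reserved for an unknown. -/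
noncomputable def cZ {ν : ℕ} (δ : ℕ) (P : MvPolynomial (Fin (ν + 1)) ℤ) (β : ℤ) : ℤ :=
  ∑ s ∈ Finset.range ν, (β ^ 2 - 1) * cQ δ P β ^ (δ + 1) ^ (s + 1)

/-- The number one of whose digits in base `cQ` carries the value of `P`. -/
noncomputable def cK {ν : ℕ} (δ : ℕ) (P : MvPolynomial (Fin (ν + 1)) ℤ) (β a g : ℤ) : ℤ :=
  (1 + a * cQ δ P β + g) ^ δ * cbar δ P (cQ δ P β)
    + cH δ P β * ∑ j ∈ Finset.range (4 * (δ + 1) ^ (ν + 1)), cQ δ P β ^ j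

/-- First of the two numbers that must have disjoint binary expansions. -/
noncomputable def cS {ν : ℕ} (δ : ℕ) (P : MvPolynomial (Fin (ν + 1)) ℤ) (β a g : ℤ) : ℤ :=
  cK δ P β a g * cN0 δ P β + g

/-- Second of the two numbers that must have disjoint binary expansions. -/
noncomputable def cT {ν : ℕ} (δ : ℕ) (P : MvPolynomial (Fin (ν + 1)) ℤ) (β : ℤ) : ℤ :=
  (cH δ P β - 1) * cQ δ P β ^ (δ + 1) ^ (ν + 1) * cN0 δ P β + (cN0 δ P β - 1 - cZ δ P β)

/-- A common strict upper bound of `cS` and `cT`. -/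
noncomputable def cN {ν : ℕ} (δ : ℕ) (P : MvPolynomial (Fin (ν + 1)) ℤ) (β : ℤ) : ℤ :=
  cN0 δ P β * cQ δ P β ^ (4 * (δ + 1) ^ (ν + 1))

/-- The lower index of the central binomial coefficient. -/
noncomputable def cX {ν : ℕ} (δ : ℕ) (P : MvPolynomial (Fin (ν + 1)) ℤ) (β a g : ℤ) : ℤ :=
  (cS δ P β a g + cT δ P β) * cN δ P β ^ 2
    + (cN δ P β ^ 2 - 1 - cS δ P β a g * cN δ P β - cT δ P β)

theorem lam_nonneg {ν δ : ℕ} (P : MvPolynomial (Fin (ν + 1)) ℤ) : 0 ≤ lam δ P :=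
  Finset.sum_nonneg fun _ _ => abs_nonneg _

theorem lam_lt {ν δ : ℕ} (P : MvPolynomial (Fin (ν + 1)) ℤ) :
    ((ν : ℤ) + 2) ^ δ * lam δ P < 2 ^ ((ν + 2) ^ δ * (lam δ P).toNat + 1) := by
  have h : (ν + 2) ^ δ * (lam δ P).toNat < 2 ^ ((ν + 2) ^ δ * (lam δ P).toNat + 1) :=
    Nat.lt_two_pow_self.trans (Nat.pow_lt_pow_right (by norm_num) (Nat.lt_succ_self _))
  have h2 : ((lam δ P).toNat : ℤ) = lam δ P := Int.toNat_of_nonneg (lam_nonneg P)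
  nth_rewrite 1 [← h2]
  exact_mod_cast h

section
variable {ν δ : ℕ} {P : MvPolynomial (Fin (ν + 1)) ℤ} {β : ℤ}

/-- The inequalities that make `cH` large enough, in the only relevant case `δ ≠ 0`. -/
theorem lam_lt_cH (hβ : β ≠ 0) : lam δ P < cH δ P β ∧ 2 ≤ cH δ P β ∧ β ^ 2 ≤ cH δ P β ∨ δ = 0 := by
  rcases Nat.eq_zero_or_pos δ with h | hδ
  · exact Or.inr h
  left
  have hb : 1 ≤ β ^ 2 := by have := sq_pos_of_ne_zero hβ; omega
  have hb2 : β ^ 2 ≤ (β ^ 2) ^ δ := le_self_pow₀ hb hδ.ne'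
  have h1 := lam_lt (δ := δ) P
  have h0 := lam_nonneg (δ := δ) P
  have h2 : (1 : ℤ) ≤ ((ν : ℤ) + 2) ^ δ := one_le_pow₀ (by omega)
  have h3 : (2 : ℤ) ≤ 2 ^ ((ν + 2) ^ δ * (lam δ P).toNat + 1) := by
    rw [pow_succ]; have : (0 : ℤ) < 2 ^ ((ν + 2) ^ δ * (lam δ P).toNat) := by positivity
    omega
  unfold cH
  refine ⟨?_, ?_, ?_⟩ <;> nlinarith

theorem cK_bound (hδ : 0 < δ) (hβ : β ≠ 0) {a g : ℤ} (ha : 0 ≤ a) (hab : a < β ^ 2)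
    (hg : 0 ≤ g) (hgN : g < cN0 δ P β) :
    0 ≤ cK δ P β a g ∧ cK δ P β a g < cQ δ P β ^ (4 * (δ + 1) ^ (ν + 1)) := by
  obtain ⟨h1, h2, h3⟩ := (lam_lt_cH (δ := δ) (P := P) hβ).resolve_right hδ.ne'
  have hQ : cQ δ P β = 2 * cH δ P β := rfl
  set H := cH δ P β
  set Q := cQ δ P β
  have hQ4 : 4 ≤ Q := by omega
  have hnν : 1 ≤ (δ + 1) ^ ν := Nat.one_le_pow _ _ (by omega)
  have hc : 0 ≤ 1 + a * Q + g ∧ 1 + a * Q + g ≤ Q ^ ((δ + 1) ^ ν + 2) := by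
    refine ⟨by nlinarith, ?_⟩
    have e1 : Q ^ 2 ≤ Q ^ ((δ + 1) ^ ν + 1) := pow_le_pow_right₀ (by omega) (by omega)
    have e2 : g < Q ^ ((δ + 1) ^ ν + 1) := hgN
    rw [pow_succ Q ((δ + 1) ^ ν + 1)]
    nlinarith
  set c := 1 + a * Q + g
  have hcb : |cbar δ P Q| < Q ^ ((δ + 1) ^ (ν + 1) + 1) := by
    refine (cbar_le Q (by omega)).trans_lt ?_
    rw [pow_succ' Q ((δ + 1) ^ (ν + 1))]
    have : 0 < Q ^ (δ + 1) ^ (ν + 1) := by positivity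
    nlinarith
  have hA : |c ^ δ * cbar δ P Q| < Q ^ (4 * (δ + 1) ^ (ν + 1) - 1) := by
    rw [abs_mul, abs_of_nonneg (pow_nonneg hc.1 _)]
    calc c ^ δ * |cbar δ P Q| ≤ (Q ^ ((δ + 1) ^ ν + 2)) ^ δ * |cbar δ P Q| :=
          mul_le_mul_of_nonneg_right (pow_le_pow_left₀ hc.1 hc.2 _) (abs_nonneg _)
      _ < (Q ^ ((δ + 1) ^ ν + 2)) ^ δ * Q ^ ((δ + 1) ^ (ν + 1) + 1) :=
          mul_lt_mul_of_pos_left hcb (by positivity)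
      _ = Q ^ (((δ + 1) ^ ν + 2) * δ + ((δ + 1) ^ (ν + 1) + 1)) := by
          rw [← pow_mul, ← pow_add]
      _ ≤ _ := by
          refine pow_le_pow_right₀ (by omega) ?_
          have : (δ + 1) ^ (ν + 1) = (δ + 1) ^ ν * δ + (δ + 1) ^ ν := by ring
          have : 1 * (δ + 1) ≤ (δ + 1) ^ ν * (δ + 1) := Nat.mul_le_mul_right _ hnν
          have : (δ + 1) ^ (ν + 1) = (δ + 1) ^ ν * (δ + 1) := by ring
          have : ((δ + 1) ^ ν + 2) * δ = (δ + 1) ^ ν * δ + 2 * δ := by ring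
          omega
  have hD : 0 < 4 * (δ + 1) ^ (ν + 1) := by positivity
  unfold cK
  obtain ⟨D, hD'⟩ : ∃ D, 4 * (δ + 1) ^ (ν + 1) = D + 1 := ⟨_, (Nat.succ_pred_eq_of_pos hD).symm⟩
  change 0 ≤ c ^ δ * cbar δ P Q + H * ∑ j ∈ Finset.range (4 * (δ + 1) ^ (ν + 1)), Q ^ j ∧
    c ^ δ * cbar δ P Q + H * ∑ j ∈ Finset.range (4 * (δ + 1) ^ (ν + 1)), Q ^ j
      < Q ^ (4 * (δ + 1) ^ (ν + 1))
  rw [hD'] at hA ⊢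
  rw [Nat.add_sub_cancel] at hA
  have hgeo := geom_sum_mul Q (D + 1)
  have hG : Q ^ D ≤ ∑ j ∈ Finset.range (D + 1), Q ^ j := by
    rw [Finset.sum_range_succ]
    have : 0 ≤ ∑ j ∈ Finset.range D, Q ^ j := Finset.sum_nonneg fun j _ => by positivity
    omega
  set G := ∑ j ∈ Finset.range (D + 1), Q ^ j
  have hW : 0 < Q ^ D := by positivity
  rw [pow_succ'] at hgeo ⊢
  set W := Q ^ D
  rw [abs_lt] at hA
  set A := c ^ δ * cbar δ P Q
  constructor
  · nlinarith
  · have e1 : (Q - 1) * A ≤ (Q - 1) * W := mul_le_mul_of_nonneg_left hA.2.le (by omega)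
    have e2 : 2 * (Q * W) ≤ H * (Q * W) := mul_le_mul_of_nonneg_right h2 (by positivity)
    have e3 : (Q - 1) * (A + H * G) < (Q - 1) * (Q * W) := by
      have : (Q - 1) * (A + H * G) = (Q - 1) * A + H * (Q * W - 1) := by rw [← hgeo]; ring
      rw [this]
      have : (Q - 1) * (Q * W) = 2 * (H * (Q * W)) - Q * W := by rw [hQ]; ring
      rw [this]
      nlinarith
    exact lt_of_mul_lt_mul_left e3 (by omega)

theorem cZ_bound (hδ : 0 < δ) (hβ : β ≠ 0) : 0 ≤ cZ δ P β ∧ cZ δ P β < cN0 δ P β := by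
  obtain ⟨h1, h2, h3⟩ := (lam_lt_cH (δ := δ) (P := P) hβ).resolve_right hδ.ne'
  have hQ : cQ δ P β = 2 * cH δ P β := rfl
  have hb : 1 ≤ β ^ 2 := by have := sq_pos_of_ne_zero hβ; omega
  obtain ⟨q, hq⟩ := Int.eq_ofNat_of_zero_le (show 0 ≤ cQ δ P β by omega)
  obtain ⟨b, hb'⟩ := Int.eq_ofNat_of_zero_le (show 0 ≤ β ^ 2 - 1 by omega)
  have hmono : StrictMono fun s : ℕ => (δ + 1) ^ (s + 1) := by
    intro s t hst
    exact Nat.pow_lt_pow_right (by omega) (by omega)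
  have h := sum_lt_pow q _ (fun _ => b) hmono (fun _ => by zify; rw [← hq, ← hb']; omega) ν
    ((δ + 1) ^ ν + 1) (fun s hs => Nat.lt_succ_of_le (Nat.pow_le_pow_right (by omega) (by omega)))
  unfold cZ cN0
  rw [hq, hb']
  exact ⟨by positivity, by exact_mod_cast h⟩

theorem cX_bound (hδ : 0 < δ) (hβ : β ≠ 0) {a g : ℤ} (ha : 0 ≤ a) (hab : a < β ^ 2)
    (hg : 0 ≤ g) (hgN : g < cN0 δ P β) :
    (0 ≤ cS δ P β a g ∧ cS δ P β a g < cN δ P β) ∧ (0 ≤ cT δ P β ∧ cT δ P β < cN δ P β) ∧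
      cQ δ P β ≤ cX δ P β a g ∧ 4 ≤ cQ δ P β ∧ β ^ 2 ≤ cQ δ P β ∧ 1 ≤ cN δ P β := by
  obtain ⟨h1, h2, h3⟩ := (lam_lt_cH (δ := δ) (P := P) hβ).resolve_right hδ.ne'
  have hQ : cQ δ P β = 2 * cH δ P β := rfl
  obtain ⟨hK, hK'⟩ := cK_bound (P := P) hδ hβ ha hab hg hgN
  obtain ⟨hZ, hZ'⟩ := cZ_bound (P := P) hδ hβ
  have hS : cS δ P β a g = cK δ P β a g * cN0 δ P β + g := rfl
  have hT : cT δ P β = (cH δ P β - 1) * cQ δ P β ^ (δ + 1) ^ (ν + 1) * cN0 δ P β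
    + (cN0 δ P β - 1 - cZ δ P β) := rfl
  have hN : cN δ P β = cN0 δ P β * cQ δ P β ^ (4 * (δ + 1) ^ (ν + 1)) := rfl
  have hX : cX δ P β a g = (cS δ P β a g + cT δ P β) * cN δ P β ^ 2
    + (cN δ P β ^ 2 - 1 - cS δ P β a g * cN δ P β - cT δ P β) := rfl
  have hN0 : cQ δ P β ≤ cN0 δ P β := le_self_pow₀ (by omega) (by omega)
  set H := cH δ P β
  set Q := cQ δ P β
  set N0 := cN0 δ P β
  set K := cK δ P β a g
  set S := cS δ P β a g
  set T := cT δ P β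
  set Z := cZ δ P β
  set N := cN δ P β
  have hm : 0 < Q ^ (δ + 1) ^ (ν + 1) := pow_pos (by omega) _
  have hmD : Q * Q ^ (δ + 1) ^ (ν + 1) ≤ Q ^ (4 * (δ + 1) ^ (ν + 1)) := by
    rw [← pow_succ']
    have : 0 < (δ + 1) ^ (ν + 1) := by positivity
    exact pow_le_pow_right₀ (by omega) (by omega)
  set M := Q ^ (δ + 1) ^ (ν + 1)
  set E := Q ^ (4 * (δ + 1) ^ (ν + 1))
  have hE : 1 ≤ E := by nlinarith
  have hS0 : 0 ≤ S := by rw [hS]; have : 0 ≤ K * N0 := mul_nonneg hK (by omega); omega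
  have hSN : S < N := by
    rw [hS, hN]; have : (K + 1) * N0 ≤ E * N0 := mul_le_mul_of_nonneg_right (by omega) (by omega)
    linarith
  have hHM : 1 ≤ (H - 1) * M := by nlinarith
  have hT1 : 1 ≤ T := by
    have : 1 * N0 ≤ (H - 1) * M * N0 := mul_le_mul_of_nonneg_right hHM (by omega)
    rw [hT]; linarith
  have hTN : T < N := by
    have e1 : (H - 1) * M + 1 ≤ E := by nlinarith
    have : ((H - 1) * M + 1) * N0 ≤ E * N0 := mul_le_mul_of_nonneg_right e1 (by omega)
    rw [hT, hN]; linarith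
  have hN1 : N0 ≤ N := by rw [hN]; nlinarith
  refine ⟨⟨hS0, hSN⟩, ⟨by omega, hTN⟩, ?_, by omega, by omega, by omega⟩
  have e1 : N ^ 2 ≤ (S + T) * N ^ 2 := by nlinarith [sq_nonneg N]
  have e2 : 0 ≤ N ^ 2 - 1 - S * N - T := by nlinarith
  have e3 : Q ≤ N ^ 2 := by nlinarith
  rw [hX]; linarith

end

/-- When `g` codes `z`, the quotient of `cK` by the power `(δ + 1) ^ (ν + 1)` of the base is
divisible by half the base exactly when `P` vanishes: modulo half the base that quotient is the
coefficient `acoeff` in this position, a nonzero multiple of the value of `P`. -/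
theorem cK_mod {ν δ : ℕ} {P : MvPolynomial (Fin (ν + 1)) ℤ} {β : ℤ} (hP : P.totalDegree ≤ δ)
    (hδ : 0 < δ) (hβ : β ≠ 0) (a : ℕ) (hab : (a : ℤ) < β ^ 2) (z : ℕ → ℕ)
    (hz : ∀ s, (z s : ℤ) < β ^ 2) (g : ℤ)
    (hg : g = ∑ s ∈ Finset.range ν, (z s : ℤ) * cQ δ P β ^ (δ + 1) ^ (s + 1)) :
    ∃ q r : ℤ, 0 ≤ q ∧ 0 ≤ r ∧ r < cQ δ P β ^ (δ + 1) ^ (ν + 1) ∧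
      cK δ P β a g = q * cQ δ P β ^ (δ + 1) ^ (ν + 1) + r ∧
      (cH δ P β ∣ q ↔
        eval (Fin.cases (a : ℤ) (fun i => (z i : ℤ)) : Fin (ν + 1) → ℤ) P = 0) := by
  obtain ⟨h1, h2, h3⟩ := (lam_lt_cH (δ := δ) (P := P) hβ).resolve_right hδ.ne'
  have hQ : cQ δ P β = 2 * cH δ P β := rfl
  set zz : Fin (ν + 1) → ℤ := Fin.cases (a : ℤ) (fun i => (z i : ℤ)) with hzz
  have hzz0 : ∀ s, 0 ≤ zz s := by
    intro s; refine Fin.cases ?_ (fun i => ?_) s <;> simp [hzz]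
  have hzzb : ∀ s, zz s ≤ β ^ 2 := by
    intro s; refine Fin.cases ?_ (fun i => ?_) s
    · simpa [hzz] using hab.le
    · simpa [hzz] using (hz i).le
  have hc : 1 + (a : ℤ) * cQ δ P β + g = 1 + ∑ s, zz s * cQ δ P β ^ (δ + 1) ^ (s : ℕ) := by
    rw [Fin.sum_univ_succ, hg, Finset.sum_range]
    simp [hzz, add_assoc]
  have hb : 1 ≤ β ^ 2 := by have := sq_pos_of_ne_zero hβ; omega
  -- every coefficient of the product is smaller than half the base
  have hcoef : ∀ m, |acoeff δ P zz m| < cH δ P β := by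
    intro m
    refine (acoeff_le zz hzz0 m).trans_lt ?_
    have e1 : 1 + ∑ s, zz s ≤ ((ν : ℤ) + 2) * β ^ 2 := by
      have := Finset.sum_le_sum (s := Finset.univ) (fun s _ => hzzb s)
      simp only [Finset.sum_const, Finset.card_univ, Fintype.card_fin, nsmul_eq_mul] at this
      push_cast at this
      linarith
    have e0 : 0 ≤ 1 + ∑ s, zz s := by
      have := Finset.sum_nonneg (s := Finset.univ) (fun s _ => hzz0 s); omega
    have e2 := mul_le_mul_of_nonneg_right (pow_le_pow_left₀ e0 e1 δ) (lam_nonneg (δ := δ) P)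
    refine e2.trans_lt ?_
    rw [mul_pow, mul_right_comm]
    exact mul_lt_mul_of_pos_right (lam_lt P) (by positivity)
  obtain ⟨R, hR, hmain⟩ := acoeff_main hP zz
  have hexp : cK δ P β a g = ∑ j ∈ Finset.range (4 * (δ + 1) ^ (ν + 1)),
      (acoeff δ P zz j + cH δ P β) * cQ δ P β ^ j := by
    unfold cK
    rw [hc, expand zz _ (4 * (δ + 1) ^ (ν + 1)) (by omega), Finset.mul_sum,
      ← Finset.sum_add_distrib]
    exact Finset.sum_congr rfl fun j _ => by ring
  obtain ⟨q, r, hq, hr, hr', h⟩ := digit_extract (cQ δ P β) (by omega)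
    (fun j => acoeff δ P zz j + cH δ P β)
    (fun j => by have := abs_lt.1 (hcoef j); constructor <;> omega)
    ((δ + 1) ^ (ν + 1)) (4 * (δ + 1) ^ (ν + 1))
    (by have : 0 < (δ + 1) ^ (ν + 1) := by positivity
        omega)
  have hcm := hcoef ((δ + 1) ^ (ν + 1))
  refine ⟨_, r, ?_, hr, hr', hexp.trans h, ?_⟩
  · have := abs_lt.1 hcm
    have : 0 ≤ cQ δ P β * q := mul_nonneg (by omega) hq
    omega
  · have e1 : acoeff δ P zz ((δ + 1) ^ (ν + 1)) + cH δ P β + cQ δ P β * q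
        = acoeff δ P zz ((δ + 1) ^ (ν + 1)) + cH δ P β * (1 + 2 * q) := by rw [hQ]; ring
    rw [e1, dvd_add_left (Dvd.intro _ rfl)]
    constructor
    · intro hd
      have := Int.eq_zero_of_abs_lt_dvd hd hcm
      rw [hmain] at this
      exact (mul_eq_zero.1 this).resolve_left hR
    · intro h0
      rw [hmain, h0, mul_zero]; exact dvd_zero _

/-- For `β ^ 2` a power of two, one divisibility of a central binomial coefficient says that `g` codes
a zero of `P` with components less than `β ^ 2`. -/
theorem coding_iff {ν δ : ℕ} {P : MvPolynomial (Fin (ν + 1)) ℤ} {β : ℤ} (hP : P.totalDegree ≤ δ)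
    (hδ : 0 < δ) (u : ℕ) (hβ : β ^ 2 = 2 ^ u) (a : ℕ) (hab : a < 2 ^ u) (g : ℤ)
    (hg : 0 ≤ g) (hgN : g < cN0 δ P β) :
    cN δ P β ^ 2 ∣ ((2 * (cX δ P β a g).toNat).choose (cX δ P β a g).toNat : ℤ) ↔
      ∃ z : ℕ → ℕ, (∀ s, z s < 2 ^ u) ∧
        g = ∑ s ∈ Finset.range ν, (z s : ℤ) * cQ δ P β ^ (δ + 1) ^ (s + 1) ∧
        eval (Fin.cases (a : ℤ) (fun i => (z i : ℤ)) : Fin (ν + 1) → ℤ) P = 0 := by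
  have hβ0 : β ≠ 0 := by
    rintro rfl
    have : (0 : ℤ) < 2 ^ u := by positivity
    rw [← hβ] at this; simp at this
  have hab' : (a : ℤ) < β ^ 2 := by rw [hβ]; exact_mod_cast hab
  obtain ⟨h1, h2, h3⟩ := (lam_lt_cH (δ := δ) (P := P) hβ0).resolve_right hδ.ne'
  obtain ⟨⟨hS, hS'⟩, ⟨hT, hT'⟩, -⟩ := cX_bound (P := P) hδ hβ0 (by positivity) hab' hg hgN
  obtain ⟨hK, hK'⟩ := cK_bound (P := P) hδ hβ0 (by positivity) hab' hg hgN
  obtain ⟨hZ, hZ'⟩ := cZ_bound (P := P) hδ hβ0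
  -- everything in sight is a natural number, and the bases are powers of two
  obtain ⟨t, ht⟩ : ∃ t, cH δ P β = 2 ^ t := by
    refine ⟨(ν + 2) ^ δ * (lam δ P).toNat + 1 + u * δ, ?_⟩
    rw [cH, hβ, ← pow_mul, ← pow_add]
  have hut : u ≤ t := by
    rw [hβ, ht] at h3
    exact (Nat.pow_le_pow_iff_right (by norm_num : 1 < 2)).1 (by exact_mod_cast h3)
  have hQ : cQ δ P β = ((2 ^ (t + 1) : ℕ) : ℤ) := by
    rw [cQ, ht]; push_cast; ring
  have hN0 : cN0 δ P β = (((2 ^ (t + 1)) ^ ((δ + 1) ^ ν + 1) : ℕ) : ℤ) := by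
    rw [cN0, hQ]; push_cast; ring
  have hN : cN δ P β
      = (((2 ^ (t + 1)) ^ ((δ + 1) ^ ν + 1) * (2 ^ (t + 1)) ^ (4 * (δ + 1) ^ (ν + 1)) : ℕ) : ℤ) := by
    rw [cN, hQ, hN0]; push_cast; ring
  have hM : cQ δ P β ^ (δ + 1) ^ (ν + 1) = (((2 ^ (t + 1)) ^ (δ + 1) ^ (ν + 1) : ℕ) : ℤ) := by
    rw [hQ]; push_cast; ring
  have hu1 : 1 ≤ 2 ^ u := Nat.one_le_two_pow
  have hZn : cZ δ P β = ((∑ s ∈ Finset.range ν, (2 ^ u - 1) * (2 ^ (t + 1)) ^ (δ + 1) ^ (s + 1) : ℕ) : ℤ) := by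
    rw [cZ, hQ, hβ]; push_cast [hu1]; rfl
  have ht1 : 1 ≤ 2 ^ t := Nat.one_le_two_pow
  obtain ⟨gn, rfl⟩ := Int.eq_ofNat_of_zero_le hg
  obtain ⟨Kn, hKn⟩ := Int.eq_ofNat_of_zero_le hK
  set N0 := (2 ^ (t + 1)) ^ ((δ + 1) ^ ν + 1) with hN0def
  set M := (2 ^ (t + 1)) ^ (δ + 1) ^ (ν + 1) with hMdef
  set N := N0 * (2 ^ (t + 1)) ^ (4 * (δ + 1) ^ (ν + 1)) with hNdef
  set Z := ∑ s ∈ Finset.range ν, (2 ^ u - 1) * (2 ^ (t + 1)) ^ (δ + 1) ^ (s + 1) with hZdef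
  have hgN' : gn < N0 := by rw [hN0] at hgN; exact_mod_cast hgN
  have hZN : Z < N0 := by rw [hZn, hN0] at hZ'; exact_mod_cast hZ'
  have hSn : cS δ P β a gn = ((Kn * N0 + gn : ℕ) : ℤ) := by
    rw [cS, hKn, hN0]; push_cast; ring
  have hTn : cT δ P β = (((2 ^ t - 1) * M * N0 + (N0 - 1 - Z) : ℕ) : ℤ) := by
    rw [cT, ht, hM, hN0, hZn, Nat.sub_sub]
    push_cast [ht1, (by omega : 1 + Z ≤ N0)]; ring
  set S := Kn * N0 + gn with hSdef
  set T := (2 ^ t - 1) * M * N0 + (N0 - 1 - Z) with hTdef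
  have hSN : S < N := by rw [hSn, hN] at hS'; exact_mod_cast hS'
  have hTN : T < N := by rw [hTn, hN] at hT'; exact_mod_cast hT'
  have hXn : cX δ P β a gn = (((S + T) * N ^ 2 + (N ^ 2 - 1 - S * N - T) : ℕ) : ℤ) := by
    have : S * N + T + 1 ≤ N ^ 2 := by nlinarith
    have e : N ^ 2 - 1 - S * N - T = N ^ 2 - (S * N + T + 1) := by omega
    rw [cX, hSn, hTn, hN, e]; push_cast [this]; ring
  have hNpow : N = 2 ^ ((t + 1) * ((δ + 1) ^ ν + 1) + (t + 1) * (4 * (δ + 1) ^ (ν + 1))) := by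
    rw [hNdef, hN0def, ← pow_mul, ← pow_mul, ← pow_add]
  have hN0pow : N0 = 2 ^ ((t + 1) * ((δ + 1) ^ ν + 1)) := by rw [hN0def, pow_mul]
  have hMpow : M = 2 ^ ((t + 1) * (δ + 1) ^ (ν + 1)) := by rw [hMdef, pow_mul]
  have hstep : cN δ P β ^ 2 ∣ ((2 * (cX δ P β a gn).toNat).choose (cX δ P β a gn).toNat : ℤ) ↔
      Kn &&& (2 ^ t - 1) * M = 0 ∧ gn &&& (N0 - 1 - Z) = 0 := by
    rw [hXn, Int.toNat_natCast, hN, ← Nat.cast_pow, Int.natCast_dvd_natCast,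
      and_eq_zero_iff _ S T N hNpow hSN hTN, hSdef, hTdef]
    rw [hN0pow]
    rw [and_shift _ _ _ _ _ (by rw [← hN0pow]; exact hgN') (by rw [← hN0pow]; omega)]
  have hmono : StrictMono fun s : ℕ => (δ + 1) ^ (s + 1) := by
    intro s t hst
    exact Nat.pow_lt_pow_right (by omega) (by omega)
  have hmask := mask_iff (t + 1) u (by omega) _ hmono ν ((δ + 1) ^ ν + 1)
    (fun s hs => Nat.lt_succ_of_le (Nat.pow_le_pow_right (by omega) (by omega))) gn hgN'
  rw [hstep, hmask]
  have hmod : ∀ z : ℕ → ℕ, (∀ s, z s < 2 ^ u) →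
      gn = ∑ s ∈ Finset.range ν, z s * (2 ^ (t + 1)) ^ (δ + 1) ^ (s + 1) →
      (Kn &&& (2 ^ t - 1) * M = 0 ↔
        eval (Fin.cases (a : ℤ) (fun i => (z i : ℤ)) : Fin (ν + 1) → ℤ) P = 0) := by
    intro z hz hgz
    obtain ⟨q, r, hq, hr, hr', hqr, hiff⟩ := cK_mod hP hδ hβ0 a hab' z
      (fun s => by rw [hβ]; exact_mod_cast hz s) gn
      (by rw [hQ]; exact_mod_cast hgz)
    obtain ⟨qn, rfl⟩ := Int.eq_ofNat_of_zero_le hq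
    obtain ⟨rn, rfl⟩ := Int.eq_ofNat_of_zero_le hr
    rw [← hiff, ht]
    rw [hM] at hqr hr'
    have e1 : Kn = qn * M + rn := by rw [hKn] at hqr; exact_mod_cast hqr
    have e2 : rn < M := by exact_mod_cast hr'
    rw [e1]
    have := and_shift ((t + 1) * (δ + 1) ^ (ν + 1)) qn (2 ^ t - 1) rn 0
      (by rw [← hMpow]; exact e2) (by positivity)
    rw [← hMpow, add_zero] at this
    rw [this, Nat.and_two_pow_sub_one_eq_mod, ← Nat.dvd_iff_mod_eq_zero]
    simp only [Nat.and_zero, and_true]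
    norm_cast
  constructor
  · rintro ⟨h4, z, hz, hgz⟩
    refine ⟨z, hz, ?_, (hmod z hz hgz).1 h4⟩
    rw [hQ]; exact_mod_cast hgz
  · rintro ⟨z, hz, hgz, h4⟩
    have hgz' : gn = ∑ s ∈ Finset.range ν, z s * (2 ^ (t + 1)) ^ (δ + 1) ^ (s + 1) := by
      rw [hQ] at hgz; exact_mod_cast hgz
    exact ⟨(hmod z hz hgz').2 h4, z, hz, hgz'⟩

/-- The number `β` as a function of the parameter `a` and the unknown `f`; up to sign it will be a
power of two. The factor `2 a + 1` makes `a < β ^ 2` automatic once `f ≠ 0` and `β ≠ 0`. -/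
def cB (a f : ℤ) : ℤ := 1 + (2 * a + 1) * f

theorem lt_cB_sq (a : ℕ) {f : ℤ} (hf : f ≠ 0) (hβ : cB a f ≠ 0) : (a : ℤ) < cB a f ^ 2 := by
  have h0 := sq_pos_of_ne_zero hβ
  unfold cB at *
  rcases Nat.eq_zero_or_pos a with rfl | ha
  · exact_mod_cast h0
  have ha' : (1 : ℤ) ≤ a := by exact_mod_cast ha
  rcases lt_or_gt_of_ne hf with h | h
  · have : 1 + (2 * (a : ℤ) + 1) * f ≤ -(2 * a) := by nlinarith
    nlinarith
  · have : (2 * (a : ℤ) + 1) ≤ 1 + (2 * a + 1) * f := by nlinarith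
    nlinarith

theorem coding_sound {ν δ : ℕ} {P : MvPolynomial (Fin (ν + 1)) ℤ} (hP : P.totalDegree ≤ δ)
    (hδ : 0 < δ) (a : ℕ) {f g : ℤ} (hf : f ≠ 0) (hβ : cB a f ≠ 0) (hg : 0 ≤ g)
    (hgN : g < cN0 δ P (cB a f)) (h2 : cB a f ∣ 2 ^ (cX δ P (cB a f) a g).toNat)
    (hY : cN δ P (cB a f) ^ 2 ∣ ((2 * (cX δ P (cB a f) a g).toNat).choose
      (cX δ P (cB a f) a g).toNat : ℤ)) :
    ∃ z : Fin ν → ℕ, eval (Fin.cases (a : ℤ) (fun i => (z i : ℤ)) : Fin (ν + 1) → ℤ) P = 0 := by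
  have hab := lt_cB_sq a hf hβ
  obtain ⟨k, -, hk⟩ : ∃ k ≤ (cX δ P (cB a f) a g).toNat, (cB a f).natAbs = 2 ^ k := by
    rw [← Nat.dvd_prime_pow Nat.prime_two]
    have := Int.natAbs_dvd_natAbs.2 h2
    rwa [Int.natAbs_pow] at this
  have hsq : cB a f ^ 2 = 2 ^ (2 * k) := by
    rw [← Int.natAbs_sq, hk]; push_cast; ring
  rw [hsq] at hab
  obtain ⟨z, -, -, hz⟩ := (coding_iff hP hδ (2 * k) hsq a (by exact_mod_cast hab) g hg hgN).1 hY
  exact ⟨fun i => z i, hz⟩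

/-- The converse. Here `β = 2 ^ j` exceeds all components of the zero, and `j` is a multiple of
`φ (2 a + 1)`, so that `β` has the required form `1 + (2 a + 1) f` by Euler's theorem. -/
theorem coding_complete {ν δ : ℕ} {P : MvPolynomial (Fin (ν + 1)) ℤ} (hP : P.totalDegree ≤ δ)
    (hδ : 0 < δ) (a : ℕ) (z : Fin ν → ℕ)
    (hz : eval (Fin.cases (a : ℤ) (fun i => (z i : ℤ)) : Fin (ν + 1) → ℤ) P = 0) :
    ∃ f g : ℤ, f ≠ 0 ∧ cB a f ≠ 0 ∧ 0 ≤ g ∧ g < cN0 δ P (cB a f) ∧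
      cB a f ∣ 2 ^ (cX δ P (cB a f) a g).toNat ∧
      cN δ P (cB a f) ^ 2 ∣ ((2 * (cX δ P (cB a f) a g).toNat).choose
        (cX δ P (cB a f) a g).toNat : ℤ) := by
  set j := (2 * a + 1).totient * (1 + ∑ i, z i) with hj
  have htot : 0 < (2 * a + 1).totient := Nat.totient_pos.2 (by omega)
  have hj1 : 1 + ∑ i, z i ≤ j := by rw [hj]; exact Nat.le_mul_of_pos_left _ htot
  obtain ⟨f, hf⟩ : (2 * (a : ℤ) + 1) ∣ 2 ^ j - 1 := by
    have h1 : 2 ^ (2 * a + 1).totient ≡ 1 [MOD 2 * a + 1] := by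
      apply Nat.ModEq.pow_totient
      rw [Nat.coprime_two_left]; exact odd_two_mul_add_one a
    have h2 := (h1.pow (1 + ∑ i, z i)).symm
    rw [← pow_mul, ← hj, one_pow, Nat.modEq_iff_dvd] at h2
    exact_mod_cast h2
  have hβ : cB a f = 2 ^ j := by unfold cB; linarith
  have hj2 : (2 : ℤ) ≤ 2 ^ j := by
    calc (2 : ℤ) = 2 ^ 1 := by norm_num
      _ ≤ 2 ^ j := pow_le_pow_right₀ (by norm_num) (by omega)
  have hf0 : f ≠ 0 := by rintro rfl; simp at hf; omega
  have hβ0 : cB a f ≠ 0 := by rw [hβ]; positivity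
  have hsq : cB a f ^ 2 = 2 ^ (2 * j) := by rw [hβ, ← pow_mul, mul_comm]
  have hab := lt_cB_sq a hf0 hβ0
  set z' : ℕ → ℕ := fun s => if h : s < ν then z ⟨s, h⟩ else 0 with hz'
  have hz'b : ∀ s, z' s < 2 ^ (2 * j) := by
    intro s
    simp only [hz']
    split_ifs with h
    · have h1 := Finset.single_le_sum (f := z) (fun _ _ => Nat.zero_le _)
        (Finset.mem_univ ⟨s, h⟩)
      have h2 : 2 * j < 2 ^ (2 * j) := Nat.lt_two_pow_self
      omega
    · positivity
  set g : ℤ := ∑ s ∈ Finset.range ν, (z' s : ℤ) * cQ δ P (cB a f) ^ (δ + 1) ^ (s + 1) with hg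
  obtain ⟨h1, h2, h3⟩ := (lam_lt_cH (δ := δ) (P := P) hβ0).resolve_right hδ.ne'
  have hQ : cQ δ P (cB a f) = 2 * cH δ P (cB a f) := rfl
  obtain ⟨q, hq⟩ := Int.eq_ofNat_of_zero_le (show 0 ≤ cQ δ P (cB a f) by omega)
  have hmono : StrictMono fun s : ℕ => (δ + 1) ^ (s + 1) := by
    intro s t hst
    exact Nat.pow_lt_pow_right (by omega) (by omega)
  have hzq : ∀ s, z' s < q := by
    intro s
    have : (z' s : ℤ) < 2 ^ (2 * j) := by exact_mod_cast hz'b s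
    zify
    rw [← hq, hQ]; rw [hsq] at h3; omega
  have hlt := sum_lt_pow q _ z' hmono hzq ν
    ((δ + 1) ^ ν + 1) (fun s hs => Nat.lt_succ_of_le (Nat.pow_le_pow_right (by omega) (by omega)))
  have hg0 : 0 ≤ g := by rw [hg, hq]; positivity
  have hgN : g < cN0 δ P (cB a f) := by rw [hg, cN0, hq]; exact_mod_cast hlt
  refine ⟨f, g, hf0, hβ0, hg0, hgN, ?_, ?_⟩
  · obtain ⟨-, -, h4, -, h5, -⟩ := cX_bound (P := P) hδ hβ0 (by positivity) hab hg0 hgN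
    have e1 : (j : ℤ) < 2 ^ (2 * j) := by
      have : 2 * j < 2 ^ (2 * j) := Nat.lt_two_pow_self
      exact_mod_cast (by omega : j < 2 ^ (2 * j))
    rw [hsq] at h5
    exact (dvd_of_eq hβ).trans (pow_dvd_pow (2 : ℤ) (by omega))
  · rw [coding_iff hP hδ (2 * j) hsq a (by rw [hsq] at hab; exact_mod_cast hab) g hg0 hgN]
    refine ⟨z', hz'b, hg, ?_⟩
    simpa [hz'] using hz

end UPair

namespace UPair

/-! ### Binomial coefficients as quotients of solutions of Pell equations -/

/-- The quotient `y_{2 X + 1}(aC) / y_{X+1}(aJ)` is close to `(V + 1) ^ (2 X) / V ^ X`. -/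
theorem ratio_bound {X U V aC aJ : ℕ} (hX : 1 ≤ X) (hV : 1 ≤ V) (hU : 4 * X ≤ U)
    (hC : 2 * aC = U * (V + 1)) (hJ : 2 * aJ = U ^ 2 * V) (c1 : 1 < aC) (j1 : 1 < aJ) :
    ((V : ℝ) + 1) ^ (2 * X) / (V : ℝ) ^ X * (1 - 2 * X / U) ≤
        (Pell.yn c1 (2 * X + 1) : ℝ) / Pell.yn j1 (X + 1) ∧
      (Pell.yn c1 (2 * X + 1) : ℝ) / Pell.yn j1 (X + 1) ≤
        ((V : ℝ) + 1) ^ (2 * X) / (V : ℝ) ^ X * (1 + 2 * X / U) := by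
  have hXr : (1 : ℝ) ≤ X := by exact_mod_cast hX
  have hVr : (1 : ℝ) ≤ V := by exact_mod_cast hV
  have hUr : (4 : ℝ) * X ≤ U := by exact_mod_cast hU
  have hCr : (2 : ℝ) * aC = U * (V + 1) := by exact_mod_cast hC
  have hJr : (2 : ℝ) * aJ = U ^ 2 * V := by exact_mod_cast hJ
  set ρ : ℝ := ((V : ℝ) + 1) ^ (2 * X) / (V : ℝ) ^ X with hρ
  set s : ℝ := 2 * aC with hs
  set t : ℝ := 2 * aJ with ht
  set ε : ℝ := X / U with hε
  have hU0 : (0 : ℝ) < U := by linarith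
  have hε4 : ε ≤ 1 / 4 := by rw [hε, div_le_iff₀ hU0]; linarith
  have hε0 : 0 ≤ ε := by positivity
  have hsU : (U : ℝ) ≤ s := by rw [hCr]; nlinarith
  have htU : (U : ℝ) ≤ t := by
    rw [hJr]
    have : (1 : ℝ) ≤ U * V := by nlinarith
    nlinarith
  have hs0 : 0 < s := by linarith
  have ht0 : 0 < t := by linarith
  have hst : s ^ (2 * X) = ρ * t ^ X := by
    rw [hCr, hJr, hρ, mul_pow, mul_pow, ← pow_mul]
    field_simp
  have hρ0 : 0 < ρ := by positivity
  have b1 : s ^ (2 * X) * (1 - 2 * ε) ≤ (s - 1) ^ (2 * X) := by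
    have h1 : (s - 1) ^ (2 * X) = s ^ (2 * X) * (1 + -(1 / s)) ^ (2 * X) := by
      rw [← mul_pow]; congr 1; field_simp; ring
    rw [h1]
    refine mul_le_mul_of_nonneg_left ?_ (by positivity)
    have h2 : 1 / s ≤ 1 := by rw [div_le_one hs0]; linarith
    refine le_trans ?_ (one_add_mul_le_pow (by linarith) (2 * X))
    have : X / s ≤ ε := div_le_div_of_nonneg_left (by positivity) hU0 hsU
    push_cast
    have h3 : (2 : ℝ) * X * -(1 / s) = -(2 * (X / s)) := by ring
    rw [h3]; linarith
  have b2 : t ^ X * (1 - ε) ≤ (t - 1) ^ X := by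
    have h1 : (t - 1) ^ X = t ^ X * (1 + -(1 / t)) ^ X := by
      rw [← mul_pow]; congr 1; field_simp; ring
    rw [h1]
    refine mul_le_mul_of_nonneg_left ?_ (by positivity)
    have h2 : 1 / t ≤ 1 := by rw [div_le_one ht0]; linarith
    refine le_trans ?_ (one_add_mul_le_pow (by linarith) X)
    have : X / t ≤ ε := div_le_div_of_nonneg_left (by positivity) hU0 htU
    have h3 : (X : ℝ) * -(1 / t) = -(X / t) := by ring
    rw [h3]; linarith
  have c2 : (Pell.yn c1 (2 * X + 1) : ℝ) ≤ s ^ (2 * X) := by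
    rw [hs]; exact_mod_cast yn_succ_le c1 (2 * X)
  have c3 : (s - 1) ^ (2 * X) ≤ Pell.yn c1 (2 * X + 1) := by
    have := le_yn_succ c1 (2 * X)
    have h : ((2 * aC - 1 : ℕ) : ℝ) = s - 1 := by rw [Nat.cast_sub (by omega)]; simp [hs]
    rw [← h]; exact_mod_cast this
  have j2 : (Pell.yn j1 (X + 1) : ℝ) ≤ t ^ X := by
    rw [ht]; exact_mod_cast yn_succ_le j1 X
  have j3 : (t - 1) ^ X ≤ Pell.yn j1 (X + 1) := by
    have := le_yn_succ j1 X
    have h : ((2 * aJ - 1 : ℕ) : ℝ) = t - 1 := by rw [Nat.cast_sub (by omega)]; simp [ht]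
    rw [← h]; exact_mod_cast this
  have htX : 0 < t ^ X := by positivity
  have hJ0 : (0 : ℝ) < Pell.yn j1 (X + 1) := by
    refine lt_of_lt_of_le ?_ (b2.trans j3)
    exact mul_pos htX (by linarith)
  have e2 : (2 : ℝ) * X / U = 2 * ε := by rw [hε]; ring
  rw [e2]
  constructor
  · rw [le_div_iff₀ hJ0]
    calc ρ * (1 - 2 * ε) * (Pell.yn j1 (X + 1) : ℝ) ≤ ρ * (1 - 2 * ε) * t ^ X :=
          mul_le_mul_of_nonneg_left j2 (mul_nonneg hρ0.le (by linarith))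
      _ = s ^ (2 * X) * (1 - 2 * ε) := by rw [hst]; ring
      _ ≤ _ := b1.trans c3
  · rw [div_le_iff₀ hJ0]
    calc (Pell.yn c1 (2 * X + 1) : ℝ) ≤ s ^ (2 * X) := c2
      _ = ρ * (t ^ X * 1) := by rw [hst]; ring
      _ ≤ ρ * (t ^ X * ((1 + 2 * ε) * (1 - ε))) := by
          refine mul_le_mul_of_nonneg_left (mul_le_mul_of_nonneg_left ?_ htX.le) hρ0.le
          nlinarith
      _ = ρ * (1 + 2 * ε) * (t ^ X * (1 - ε)) := by ring
      _ ≤ _ := mul_le_mul_of_nonneg_left (b2.trans j3) (by positivity)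

/-- The integral and the fractional part of `(V + 1) ^ (2 X) / V ^ X`. -/
theorem central_part (X V : ℕ) : ∃ I r : ℕ, (V + 1) ^ (2 * X) = V ^ X * I + r ∧
    V * r ≤ 4 ^ X * V ^ X ∧ (V : ℤ) ∣ (I : ℤ) - ((2 * X).choose X : ℕ) ∧ V ^ X ≤ I := by
  refine ⟨∑ i ∈ Finset.range (X + 1), (2 * X).choose (X + i) * V ^ i,
    ∑ i ∈ Finset.range X, (2 * X).choose i * V ^ i, ?_, ?_, ?_, ?_⟩
  · rw [add_pow, show 2 * X + 1 = X + (X + 1) by ring, Finset.sum_range_add, add_comm,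
      Finset.mul_sum]
    congr 1
    · refine Finset.sum_congr rfl fun i _ => ?_
      rw [one_pow, pow_add, Nat.cast_id]; ring
    · refine Finset.sum_congr rfl fun i _ => ?_
      rw [one_pow, Nat.cast_id]; ring
  · rw [Finset.mul_sum]
    have h4 : ∑ i ∈ Finset.range X, (2 * X).choose i ≤ 4 ^ X := by
      rw [show 4 ^ X = 2 ^ (2 * X) by rw [pow_mul]; norm_num, ← Nat.sum_range_choose]
      exact Finset.sum_le_sum_of_subset (Finset.range_mono (by omega))
    refine le_trans ?_ (Nat.mul_le_mul_right _ h4)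
    rw [Finset.sum_mul]
    refine Finset.sum_le_sum fun i hi => ?_
    have hi' := Finset.mem_range.1 hi
    rcases Nat.eq_zero_or_pos V with rfl | hV
    · simp
    calc V * ((2 * X).choose i * V ^ i) = (2 * X).choose i * V ^ (i + 1) := by ring
      _ ≤ _ := Nat.mul_le_mul_left _ (Nat.pow_le_pow_right hV (by omega))
  · rw [Finset.sum_range_succ']
    push_cast
    rw [show X + 0 = X by rfl, pow_zero, mul_one, add_sub_cancel_right]
    refine Finset.dvd_sum fun i _ => ?_
    exact ⟨(2 * X).choose (X + (i + 1)) * V ^ i, by ring⟩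
  · rw [Finset.sum_range_succ, ← two_mul, Nat.choose_self, one_mul]
    omega

/-- A value `y_m(aJ)` close to `y_{2 X + 1}(aC)` and with `m` congruent to `±(X + 1)` modulo
`aJ - 1` must have `m = X + 1`, since otherwise it is far too large. -/
theorem index_eq {X aC aJ m L : ℕ} (hX : 1 ≤ X) (c1 : 1 < aC) (j1 : 1 < aJ)
    (hCJ : 2 * aC ≤ aJ) (hXJ : 5 * X + 3 ≤ aJ) (hL : 1 ≤ L)
    (hm : (aJ : ℤ) - 1 ∣ m - (X + 1) ∨ (aJ : ℤ) - 1 ∣ m + (X + 1))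
    (hlt : 4 * |(Pell.yn c1 (2 * X + 1) : ℤ) - L * Pell.yn j1 m| < Pell.yn j1 m) :
    m = X + 1 := by
  by_contra hne
  have hmX : 4 * X + 1 ≤ m := by
    rcases hm with h | h
    · by_contra hlt'
      have h2 := Int.eq_zero_of_abs_lt_dvd h (by rw [abs_lt]; constructor <;> omega)
      omega
    · have := Int.le_of_dvd (by omega) h
      omega
  obtain ⟨n, rfl⟩ : ∃ n, m = n + 1 := ⟨m - 1, by omega⟩
  have h1 : (2 * aC) ^ (2 * X) * 2 ≤ (2 * aJ - 1) ^ n := by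
    calc (2 * aC) ^ (2 * X) * 2 ≤ aJ ^ (2 * X) * aJ := by gcongr; omega
      _ = aJ ^ (2 * X + 1) := (pow_succ _ _).symm
      _ ≤ aJ ^ n := Nat.pow_le_pow_right (by omega) (by omega)
      _ ≤ _ := Nat.pow_le_pow_left (by omega) _
  have h2 := le_yn_succ j1 n
  have h3 := yn_succ_le c1 (2 * X)
  have h4 : ((Pell.yn c1 (2 * X + 1) : ℕ) : ℤ) * 2 ≤ Pell.yn j1 (n + 1) := by
    exact_mod_cast (Nat.mul_le_mul_right 2 h3).trans (h1.trans h2)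
  have h5 := (abs_lt.1 (show |(Pell.yn c1 (2 * X + 1) : ℤ) - L * Pell.yn j1 (n + 1)| <
    ((Pell.yn j1 (n + 1) : ℤ) + 3) / 4 by omega)).1
  have h6 : (Pell.yn j1 (n + 1) : ℤ) ≤ L * Pell.yn j1 (n + 1) :=
    le_mul_of_one_le_left (by positivity) (by exact_mod_cast hL)
  omega

/-- The congruence satisfied by `2 ^ B` and `y_B(a)` determines `2 ^ B` among small numbers. -/
theorem exp_unique {a B q M : ℕ} (a1 : 1 < a) (hq : 1 ≤ q) (hqM : q ≤ M) (hBM : 2 ^ B ≤ M)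
    (hMa : M * (q * 2 ^ B + 1) < 4 * a - 5)
    (h : 4 * (a : ℤ) - 5 ∣ 3 * q * Pell.yn a1 B - 2 * ((q : ℤ) ^ 2 - 1)) : q = 2 ^ B := by
  have h1 := yn_two_pow a1 B
  have h4 : (4 : ℤ) ^ B = (2 ^ B) ^ 2 := by rw [← pow_mul, mul_comm, pow_mul]; norm_num
  rw [h4] at h1
  have h2 : 4 * (a : ℤ) - 5 ∣ 2 * ((q - 2 ^ B) * (q * 2 ^ B + 1)) := by
    have := dvd_sub (h1.mul_left q) (h.mul_left (2 ^ B))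
    have e : q * (3 * 2 ^ B * (Pell.yn a1 B : ℤ) - 2 * ((2 ^ B) ^ 2 - 1)) -
        2 ^ B * (3 * q * Pell.yn a1 B - 2 * ((q : ℤ) ^ 2 - 1))
        = 2 * ((q - 2 ^ B) * (q * 2 ^ B + 1)) := by ring
    rwa [e] at this
  have h3 : IsCoprime (4 * (a : ℤ) - 5) 2 := ⟨1, -(2 * a - 3), by ring⟩
  have h5 := h3.dvd_of_dvd_mul_left h2
  have hMa' : (M : ℤ) * (q * 2 ^ B + 1) < 4 * a - 5 := by
    have : ((M * (q * 2 ^ B + 1) : ℕ) : ℤ) < ((4 * a - 5 : ℕ) : ℤ) := by exact_mod_cast hMa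
    rw [Nat.cast_sub (by omega)] at this
    exact_mod_cast this
  have hB1 : 1 ≤ 2 ^ B := Nat.one_le_two_pow
  have h6 : (q - 2 ^ B : ℤ) * (q * 2 ^ B + 1) = 0 := by
    refine Int.eq_zero_of_abs_lt_dvd h5 (lt_of_le_of_lt ?_ hMa')
    rw [abs_mul, abs_of_nonneg (by positivity : (0 : ℤ) ≤ q * 2 ^ B + 1)]
    refine mul_le_mul_of_nonneg_right ?_ (by positivity)
    zify at hq hqM hBM hB1
    rw [abs_le]; constructor <;> linarith
  rcases mul_eq_zero.1 h6 with h | h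
  · have : (q : ℤ) = 2 ^ B := by linarith
    exact_mod_cast this
  · have : (0 : ℤ) ≤ q * 2 ^ B := by positivity
    omega

theorem aux_size (L V : ℕ) :
    L * (V * L + 1) + 5 < 96 * (L ^ 2 + 1) * (V + 1) := by
  have h : L ≤ L ^ 2 := Nat.le_self_pow (by norm_num) _
  have e1 : L * (V * L + 1) = V * L ^ 2 + L := by ring
  have e2 : 96 * (L ^ 2 + 1) * (V + 1) = 96 * (V * L ^ 2) + 96 * L ^ 2 + 96 * V + 96 := by ring
  omega

/-- The arithmetical content of the Pell conditions, in natural numbers. -/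
theorem core_sound {X N0 Y q L V U aC aJ m : ℕ} (hX : 2 ≤ X) (hN : 1 ≤ N0) (hY : 1 ≤ Y)
    (hq : 2 ≤ q) (hL : 1 ≤ L) (hV : V = 16 * q * Y * N0) (hU : U = 48 * N0 * X * (L ^ 2 + 1))
    (haC : aC = U * (V + 1)) (haJ : aJ = 2 * U ^ 2 * V) (c1 : 1 < aC) (j1 : 1 < aJ)
    (hm : (aJ : ℤ) - 1 ∣ m - (X + 1) ∨ (aJ : ℤ) - 1 ∣ m + (X + 1))
    (hlt : 4 * |(Pell.yn c1 (2 * X + 1) : ℤ) - L * Pell.yn j1 m| < Pell.yn j1 m)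
    (hS : 4 * (aC : ℤ) - 5 ∣ 3 * q * Pell.yn c1 (2 * X + 1) - 2 * ((q : ℤ) ^ 2 - 1))
    (hYL : Y ∣ L) : q = 2 ^ (2 * X + 1) ∧ Y ∣ (2 * X).choose X := by
  have hV32 : 32 ≤ V := by rw [hV]; nlinarith [Nat.mul_le_mul hY hN, Nat.mul_le_mul hq (Nat.mul_le_mul hY hN)]
  have hqV : 16 * q ≤ V := by
    rw [hV, mul_assoc]; exact Nat.le_mul_of_pos_right _ (Nat.mul_pos hY hN)
  have hUX : 96 * X ≤ U := by
    rw [hU]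
    have : 1 ≤ L ^ 2 := Nat.one_le_pow _ _ hL
    calc 96 * X = 48 * 1 * X * 2 := by ring
      _ ≤ 48 * N0 * X * (L ^ 2 + 1) := by gcongr; omega
  have hUL : 96 * (L ^ 2 + 1) ≤ U := by
    rw [hU]
    calc 96 * (L ^ 2 + 1) = 48 * 1 * 2 * (L ^ 2 + 1) := by ring
      _ ≤ _ := by gcongr
  have hCJ : 2 * aC ≤ aJ := by
    rw [haC, haJ]
    calc 2 * (U * (V + 1)) ≤ 2 * (U * (V * U)) := by gcongr; nlinarith
      _ = _ := by ring
  obtain rfl : m = X + 1 := by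
    refine index_eq (by omega) c1 j1 hCJ ?_ hL hm hlt
    have : U ≤ aC := by rw [haC]; nlinarith
    omega
  obtain ⟨b1, b2⟩ := ratio_bound (X := X) (U := 2 * U) (V := V) (by omega) (by omega) (by omega)
    (by rw [haC]; ring) (by rw [haJ]; ring) c1 j1
  obtain ⟨I, r, hI, hr, hIV, hVI⟩ := central_part X V
  set ρ : ℝ := ((V : ℝ) + 1) ^ (2 * X) / (V : ℝ) ^ X with hρ
  have hVX : (0 : ℝ) < (V : ℝ) ^ X := by
    have : (0 : ℝ) < V := by exact_mod_cast (by omega : 0 < V)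
    positivity
  have hV0 : (0 : ℝ) < V := by exact_mod_cast (by omega : 0 < V)
  have hρI : ρ = I + r / (V : ℝ) ^ X := by
    rw [hρ]
    have : ((V : ℝ) + 1) ^ (2 * X) = (V : ℝ) ^ X * I + r := by exact_mod_cast hI
    rw [this]; field_simp
  have hθ : r / (V : ℝ) ^ X ≤ 4 ^ X / V := by
    rw [div_le_div_iff₀ hVX hV0]
    have : (V : ℝ) * r ≤ 4 ^ X * (V : ℝ) ^ X := by exact_mod_cast hr
    linarith
  have hθ0 : 0 ≤ r / (V : ℝ) ^ X := by positivity
  have hJ0 : 0 < (Pell.yn j1 (X + 1) : ℝ) := by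
    exact_mod_cast (Pell.strictMono_y j1 (Nat.succ_pos X) : Pell.yn j1 0 < _)
  set c : ℝ := (Pell.yn c1 (2 * X + 1) : ℝ) / Pell.yn j1 (X + 1) with hc
  have hcL : |c - L| < 1 / 4 := by
    have h1 : c - L = ((Pell.yn c1 (2 * X + 1) : ℝ) - L * Pell.yn j1 (X + 1)) /
        Pell.yn j1 (X + 1) := by rw [hc]; field_simp
    rw [h1, abs_div, abs_of_pos hJ0, div_lt_iff₀ hJ0]
    have : (4 : ℝ) * |(Pell.yn c1 (2 * X + 1) : ℝ) - L * Pell.yn j1 (X + 1)|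
        < Pell.yn j1 (X + 1) := by exact_mod_cast hlt
    linarith
  rw [abs_lt] at hcL
  have hLr : (1 : ℝ) ≤ L := by exact_mod_cast hL
  -- the relative error `2 X / (2 U)` is at most `1 / (96 (L² + 1))`
  have hε : (2 : ℝ) * X / ((2 * U : ℕ) : ℝ) ≤ 1 / (48 * (L ^ 2 + 1)) := by
    have hUX' : 48 * X * (L ^ 2 + 1) ≤ U := by
      rw [hU]
      calc 48 * X * (L ^ 2 + 1) = 48 * 1 * X * (L ^ 2 + 1) := by ring
        _ ≤ _ := by gcongr
    have hUX'' : (48 : ℝ) * X * (L ^ 2 + 1) ≤ U := by exact_mod_cast hUX'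
    have hU0 : (0 : ℝ) < U := by
      exact_mod_cast (by omega : 0 < U)
    push_cast
    rw [div_le_div_iff₀ (by positivity) (by positivity)]
    nlinarith
  set ε : ℝ := (2 : ℝ) * X / ((2 * U : ℕ) : ℝ) with hεd
  have hε0 : 0 ≤ ε := by positivity
  have hε96 : ε ≤ 1 / 96 := hε.trans (by
    rw [div_le_div_iff₀ (by positivity) (by norm_num)]; nlinarith)
  have hρ0 : 0 < ρ := by positivity
  rw [mul_sub, mul_one] at b1
  rw [mul_add, mul_one] at b2
  have hρ2 : ρ ≤ 2 * (L + 1) := by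
    have := mul_le_mul_of_nonneg_left hε96 hρ0.le
    linarith
  have herr : ρ * ε ≤ 1 / 12 := by
    have h1 : ρ * ε ≤ 2 * (L + 1) * (1 / (48 * (L ^ 2 + 1))) := by gcongr
    refine h1.trans ?_
    rw [mul_one_div, div_le_div_iff₀ (by positivity) (by norm_num)]
    nlinarith
  have hLρ : |(L : ℝ) - ρ| < 1 / 3 := by
    rw [abs_lt]; constructor <;> linarith
  rw [abs_lt] at hLρ
  have hLV : V ^ X ≤ L := by
    have h1 : (V : ℝ) ^ X ≤ I := by exact_mod_cast hVI
    have h2 : (I : ℝ) < L + 1 := by linarith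
    have h3 : I < L + 1 := by exact_mod_cast h2
    omega
  have hqe : q = 2 ^ (2 * X + 1) := by
    have e1 : 2 ^ (2 * X + 1) ≤ V ^ X := by
      calc 2 ^ (2 * X + 1) ≤ 2 ^ (5 * X) := Nat.pow_le_pow_right (by norm_num) (by omega)
        _ = 32 ^ X := by rw [pow_mul]; norm_num
        _ ≤ _ := Nat.pow_le_pow_left hV32 _
    have e2 : V ≤ V ^ X := Nat.le_self_pow (by omega) _
    refine exp_unique c1 (M := V ^ X) (by omega) (by omega) e1 ?_ hS
    have e3 : V ^ X * (q * 2 ^ (2 * X + 1) + 1) ≤ L * (V * L + 1) := by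
      refine Nat.mul_le_mul hLV (Nat.succ_le_succ (Nat.mul_le_mul (by omega) (e1.trans hLV)))
    have e4 : 96 * (L ^ 2 + 1) * (V + 1) ≤ aC := by rw [haC]; gcongr
    have e5 : L * (V * L + 1) + 5 < 96 * (L ^ 2 + 1) * (V + 1) := aux_size L V
    omega
  refine ⟨hqe, ?_⟩
  have hθ1 : r / (V : ℝ) ^ X ≤ 1 / 32 := by
    refine hθ.trans ?_
    have : 32 * 4 ^ X ≤ V := by
      calc 32 * 4 ^ X = 16 * q := by rw [hqe, pow_succ, pow_mul]; norm_num; ring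
        _ ≤ V := hqV
    have : (32 : ℝ) * 4 ^ X ≤ V := by exact_mod_cast this
    rw [div_le_div_iff₀ hV0 (by norm_num)]; linarith
  have hLI : L = I := by
    have h1 : (L : ℝ) < I + 1 := by linarith
    have h2 : (I : ℝ) < L + 1 := by linarith
    have h1' : L < I + 1 := by exact_mod_cast h1
    have h2' : I < L + 1 := by exact_mod_cast h2
    omega
  have hYV : (Y : ℤ) ∣ V := by
    rw [hV]; exact ⟨16 * q * N0, by push_cast; ring⟩
  have := (hYV.trans hIV)
  have hYI : (Y : ℤ) ∣ I := by rw [← hLI]; exact_mod_cast hYL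
  have h3 := dvd_sub hYI this
  rw [sub_sub_cancel] at h3
  exact_mod_cast h3

/-- The converse estimate: with the right choices the quotient is very close to an integer. -/
theorem core_complete {X N0 Y q V : ℕ} (hX : 2 ≤ X) (hN : 1 ≤ N0) (hY : 1 ≤ Y)
    (hq : q = 2 ^ (2 * X + 1)) (hV : V = 16 * q * Y * N0) (hYX : Y ∣ (2 * X).choose X) :
    ∃ L : ℕ, 1 ≤ L ∧ Y ∣ L ∧ ∀ U aC aJ : ℕ, U = 48 * N0 * X * (L ^ 2 + 1) →
      aC = U * (V + 1) → aJ = 2 * U ^ 2 * V → ∀ (c1 : 1 < aC) (j1 : 1 < aJ),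
      4 * N0 * |(Pell.yn c1 (2 * X + 1) : ℤ) - L * Pell.yn j1 (X + 1)| < Pell.yn j1 (X + 1) := by
  obtain ⟨I, r, hI, hr, hIV, hVI⟩ := central_part X V
  have hV1 : 1 ≤ V := by
    rw [hV, hq]
    exact Nat.mul_pos (Nat.mul_pos (by positivity) hY) hN
  have hI1 : 1 ≤ I := (Nat.one_le_pow _ _ hV1).trans hVI
  refine ⟨I, hI1, ?_, ?_⟩
  · have hYV : (Y : ℤ) ∣ V := by
      rw [hV]; exact ⟨16 * q * N0, by push_cast; ring⟩
    have := dvd_add (hYV.trans hIV) (Int.natCast_dvd_natCast.2 hYX)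
    rw [sub_add_cancel] at this
    exact_mod_cast this
  intro U aC aJ hU haC haJ c1 j1
  have hUX : 2 * X ≤ U := by
    rw [hU]
    calc 2 * X ≤ 48 * 1 * X * 1 := by omega
      _ ≤ 48 * N0 * X * (I ^ 2 + 1) := by gcongr; omega
  obtain ⟨b1, b2⟩ := ratio_bound (X := X) (U := 2 * U) (V := V) (by omega) (by omega) (by omega)
    (by rw [haC]; ring) (by rw [haJ]; ring) c1 j1
  set ρ : ℝ := ((V : ℝ) + 1) ^ (2 * X) / (V : ℝ) ^ X with hρ
  have hV0 : (0 : ℝ) < V := by exact_mod_cast (by omega : 0 < V)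
  have hVX : (0 : ℝ) < (V : ℝ) ^ X := by positivity
  have hN0 : (1 : ℝ) ≤ N0 := by exact_mod_cast hN
  have hρI : ρ = I + r / (V : ℝ) ^ X := by
    rw [hρ]
    have : ((V : ℝ) + 1) ^ (2 * X) = (V : ℝ) ^ X * I + r := by exact_mod_cast hI
    rw [this]; field_simp
  have hθ : r / (V : ℝ) ^ X ≤ 1 / (32 * N0) := by
    have h1 : r / (V : ℝ) ^ X ≤ 4 ^ X / V := by
      rw [div_le_div_iff₀ hVX hV0]
      have : (V : ℝ) * r ≤ 4 ^ X * (V : ℝ) ^ X := by exact_mod_cast hr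
      linarith
    refine h1.trans ?_
    have : 4 ^ X * (32 * N0) ≤ V := by
      calc 4 ^ X * (32 * N0) = 16 * q * 1 * N0 := by
            rw [hq, pow_succ, pow_mul]; norm_num; ring
        _ ≤ V := by rw [hV]; gcongr
    rw [div_le_div_iff₀ hV0 (by positivity), one_mul]
    exact_mod_cast this
  have hθ0 : 0 ≤ r / (V : ℝ) ^ X := by positivity
  have hθ1 : r / (V : ℝ) ^ X ≤ 1 := hθ.trans (by
    rw [div_le_one (by positivity)]; linarith)
  have hJ0 : 0 < (Pell.yn j1 (X + 1) : ℝ) := by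
    exact_mod_cast (Pell.strictMono_y j1 (Nat.succ_pos X) : Pell.yn j1 0 < _)
  set c : ℝ := (Pell.yn c1 (2 * X + 1) : ℝ) / Pell.yn j1 (X + 1) with hc
  have hIr : (1 : ℝ) ≤ I := by exact_mod_cast hI1
  have hε : (2 : ℝ) * X / ((2 * U : ℕ) : ℝ) = 1 / (48 * N0 * (I ^ 2 + 1)) := by
    have hX0 : (0 : ℝ) < X := by exact_mod_cast (by omega : 0 < X)
    rw [hU]; push_cast; field_simp
  rw [hε, mul_sub, mul_one] at b1
  rw [hε, mul_add, mul_one] at b2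
  have herr : ρ * (1 / (48 * N0 * (I ^ 2 + 1))) ≤ 1 / (24 * N0) := by
    have h1 : ρ * (1 / (48 * N0 * (I ^ 2 + 1)))
        ≤ (I + 1) * (1 / (48 * N0 * ((I : ℝ) ^ 2 + 1))) := by
      gcongr; linarith
    refine h1.trans ?_
    rw [mul_one_div, div_le_div_iff₀ (by positivity) (by positivity)]
    nlinarith [mul_pos (by linarith : (0:ℝ) < N0) (by linarith : (0:ℝ) < I), mul_nonneg (by linarith : (0:ℝ) ≤ N0) (by nlinarith : (0:ℝ) ≤ (I:ℝ)^2 - I)]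
  have hsum : (1 : ℝ) / (24 * N0) + 1 / (32 * N0) < 1 / (4 * N0) := by
    have : (0 : ℝ) < 1 / N0 := by positivity
    have e : ∀ k : ℝ, 1 / (k * N0) = (1 / k) * (1 / N0) := fun k => by
      rw [one_div_mul_one_div]
    rw [e, e, e]; linarith
  have hcL : |c - I| < 1 / (4 * N0) := by
    have p1 : 0 < (1 : ℝ) / (32 * N0) := by positivity
    rw [abs_lt]; constructor <;> linarith
  have h1 : c - I = ((Pell.yn c1 (2 * X + 1) : ℝ) - I * Pell.yn j1 (X + 1)) /
      Pell.yn j1 (X + 1) := by rw [hc]; field_simp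
  rw [h1, abs_div, abs_of_pos hJ0, div_lt_div_iff₀ hJ0 (by positivity)] at hcL
  have : (4 : ℝ) * N0 * |(Pell.yn c1 (2 * X + 1) : ℝ) - I * Pell.yn j1 (X + 1)|
      < Pell.yn j1 (X + 1) := by linarith
  exact_mod_cast this

/-- The four quantities `β`, `N0`, `X`, `Y` produced by the coding of the original equation,
together with nine of the unknowns. -/
structure Dat where
  (β N0 X Y f g h k l w x y v : ℤ)

namespace Dat

variable (d : Dat)

/-- A candidate for the binomial coefficient `(2 X choose X)` modulo `V`. -/
def L : ℤ := d.l * d.Y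
/-- A candidate for `2 ^ (2 X + 1)`. -/
def q : ℤ := 2 * (d.β * d.w) ^ 2
/-- The base in which the powers of `1 + V` are expanded. -/
def V : ℤ := 16 * d.q * d.Y * d.N0
/-- The factor controlling the precision of the Pell approximation. -/
def U : ℤ := 48 * d.N0 * d.X * (d.L ^ 2 + 1)
/-- The parameter of the Pell sequence of `C`. -/
def aC : ℤ := d.U * (d.V + 1)
/-- The parameter of the Pell sequence of `J`. -/
def aJ : ℤ := 2 * d.U ^ 2 * d.V
/-- The number intended to be `y_{2 X + 1}(aC)`. -/
def C : ℤ := (2 * d.X + 1) + (d.aC - 1) * d.h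
/-- A Pell number divisible by `2 C ^ 2`. -/
def E : ℤ := 2 * d.C ^ 2 * d.x
/-- The square of the abscissa belonging to `E`. -/
def F : ℤ := (d.aC ^ 2 - 1) * d.E ^ 2 + 1
/-- An auxiliary Pell parameter, congruent to `aC` modulo `F` and to `1` modulo `2 C`. -/
def G : ℤ := d.aC + d.F * (d.F - d.aC)
/-- An auxiliary Pell number, congruent to `C` modulo `F` and to `2 X + 1` modulo `2 C`. -/
def H : ℤ := d.C + d.F * ((2 * d.X + 1) - d.C + 2 * d.C * d.y)
/-- The number intended to be `± y_{X+1}(aJ)`. -/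
def J : ℤ := d.X + 1 + (d.aJ - 1) * d.k
/-- Positivity of this number forces `0 ≤ g < N0` and `C / J` close to `L`. -/
def R : ℤ := (2 * d.g + 1) * (2 * d.N0 - 2 * d.g - 1) * d.J ^ 2
  - 16 * d.N0 ^ 2 * (d.C - d.L * d.J) ^ 2
/-- The five numbers that have to be squares. -/
def A : Fin 5 → ℤ := ![(d.aC ^ 2 - 1) * d.C ^ 2 + 1, d.F, (d.G ^ 2 - 1) * d.H ^ 2 + 1,
  (d.aJ ^ 2 - 1) * d.J ^ 2 + 1, (4 * d.R - 2) * d.v ^ 2 + 1]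
/-- The modulus of the divisibility condition. -/
def S : ℤ := 4 * d.aC - 5
/-- The number that has to be divisible by `S`. -/
def T : ℤ := 3 * d.q * d.C - 2 * (d.q ^ 2 - 1)
/-- The product of all the numbers that must not vanish. -/
def Bnz : ℤ := d.v * d.x * d.w * d.l * d.β * d.f

/-- The complete system: five squares, one divisibility and one inequation. -/
def Good : Prop := (∀ i, IsSquare (d.A i)) ∧ d.S ∣ d.T ∧ d.Bnz ≠ 0

end Dat

theorem R_pos {R v : ℤ} (hv : v ≠ 0) (h : IsSquare ((4 * R - 2) * v ^ 2 + 1)) : 0 < R := by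
  by_contra hR
  obtain ⟨r, hr⟩ := h
  have h1 : 1 ≤ v ^ 2 := by have := sq_pos_of_ne_zero hv; omega
  nlinarith [mul_self_nonneg r]

theorem of_R_pos {N g C L J : ℤ} (hN : 1 ≤ N)
    (h : 0 < (2 * g + 1) * (2 * N - 2 * g - 1) * J ^ 2 - 16 * N ^ 2 * (C - L * J) ^ 2) :
    0 ≤ g ∧ g < N ∧ 4 * |C - L * J| < |J| := by
  have h1 : 0 < (2 * g + 1) * (2 * N - 2 * g - 1) * J ^ 2 := by
    have : 0 ≤ 16 * N ^ 2 * (C - L * J) ^ 2 := by positivity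
    linarith
  have h2 : 0 < (2 * g + 1) * (2 * N - 2 * g - 1) := pos_of_mul_pos_left h1 (sq_nonneg J)
  have h3 : 0 < 2 * g + 1 ∧ 0 < 2 * N - 2 * g - 1 := by
    rcases mul_pos_iff.1 h2 with h | h
    · exact h
    · omega
  refine ⟨by omega, by omega, ?_⟩
  have h4 : (2 * g + 1) * (2 * N - 2 * g - 1) ≤ N ^ 2 := by nlinarith [sq_nonneg (N - 2 * g - 1)]
  have h5 : N ^ 2 * (4 * (C - L * J)) ^ 2 < N ^ 2 * J ^ 2 := by
    nlinarith [mul_le_mul_of_nonneg_right h4 (sq_nonneg J)]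
  have h6 := sq_lt_sq.1 (lt_of_mul_lt_mul_left h5 (sq_nonneg N))
  rwa [abs_mul, abs_of_pos (by norm_num : (0 : ℤ) < 4)] at h6

theorem abs_sub_mul_abs {C L J : ℤ} (hC : 0 ≤ C) (hL : L ≠ 0) (h : 4 * |C - L * J| < |J|) :
    4 * |C - abs L * abs J| < |J| := by
  have h0 := abs_nonneg (C - L * J)
  rw [← abs_mul]
  rcases le_or_gt 0 (L * J) with h1 | h1
  · rwa [abs_of_nonneg h1]
  · exfalso
    have h2 : |J| ≤ -(L * J) := by
      rw [← abs_of_neg h1, abs_mul]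
      exact le_mul_of_one_le_left (abs_nonneg _) (Int.one_le_abs hL)
    have := le_abs_self (C - L * J)
    omega

/-- The system forces `β` to divide a power of two, `g` to lie in its range, and `Y` to divide the
binomial coefficient. -/
theorem bridge_sound (d : Dat) (hN : 1 ≤ d.N0) (hX : 2 ≤ d.X) (hY : 1 ≤ d.Y) (hd : d.Good) :
    d.f ≠ 0 ∧ d.β ≠ 0 ∧ 0 ≤ d.g ∧ d.g < d.N0 ∧ d.β ∣ 2 ^ d.X.toNat ∧
      d.Y ∣ ((2 * d.X.toNat).choose d.X.toNat : ℤ) := by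
  obtain ⟨hA, hST, hB⟩ := hd
  simp only [Dat.Bnz, mul_ne_zero_iff] at hB
  obtain ⟨⟨⟨⟨⟨hv, hx⟩, hw⟩, hl⟩, hβ⟩, hf⟩ := hB
  have hA0 : IsSquare ((d.aC ^ 2 - 1) * d.C ^ 2 + 1) := hA 0
  have hA1 : IsSquare d.F := hA 1
  have hA2 : IsSquare ((d.G ^ 2 - 1) * d.H ^ 2 + 1) := hA 2
  have hA3 : IsSquare ((d.aJ ^ 2 - 1) * d.J ^ 2 + 1) := hA 3
  have hA4 : IsSquare ((4 * d.R - 2) * d.v ^ 2 + 1) := hA 4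
  obtain ⟨hg, hgN, hCJ⟩ := of_R_pos hN (R_pos hv hA4)
  have hL0 : d.L ≠ 0 := mul_ne_zero hl (by omega)
  -- pass to natural numbers
  obtain ⟨X, hXn⟩ := Int.eq_ofNat_of_zero_le (show 0 ≤ d.X by omega)
  obtain ⟨N0, hNn⟩ := Int.eq_ofNat_of_zero_le (show 0 ≤ d.N0 by omega)
  obtain ⟨Y, hYn⟩ := Int.eq_ofNat_of_zero_le (show 0 ≤ d.Y by omega)
  have hX' : 2 ≤ X := by omega
  have hN' : 1 ≤ N0 := by omega
  have hY' : 1 ≤ Y := by omega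
  set q : ℕ := 2 * (d.β * d.w).natAbs ^ 2 with hq
  have hqn : d.q = q := by rw [Dat.q, hq]; push_cast; rw [sq_abs]
  have hq2 : 2 ≤ q := by
    have : 0 < (d.β * d.w).natAbs := Int.natAbs_pos.2 (mul_ne_zero hβ hw)
    have := Nat.pow_pos (n := 2) this
    omega
  set L : ℕ := d.L.natAbs with hL
  have hL1 : 1 ≤ L := Int.natAbs_pos.2 hL0
  have hLn : d.L ^ 2 = (L : ℤ) ^ 2 := (Int.natAbs_sq _).symm
  set V : ℕ := 16 * q * Y * N0 with hV
  have hVn : d.V = V := by rw [Dat.V, hqn, hYn, hNn, hV]; push_cast; ring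
  set U : ℕ := 48 * N0 * X * (L ^ 2 + 1) with hU
  have hUn : d.U = U := by rw [Dat.U, hNn, hXn, hLn, hU]; push_cast; ring
  set aC : ℕ := U * (V + 1) with haC
  have haCn : d.aC = aC := by rw [Dat.aC, hUn, hVn, haC]; push_cast; ring
  set aJ : ℕ := 2 * U ^ 2 * V with haJ
  have haJn : d.aJ = aJ := by rw [Dat.aJ, hUn, hVn, haJ]; push_cast; ring
  have hU1 : 48 * X ≤ U := by
    calc 48 * X = 48 * 1 * X * 1 := by ring
      _ ≤ _ := by rw [hU]; gcongr; omega
  have hV1 : 1 ≤ V := by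
    rw [hV]; exact Nat.mul_pos (Nat.mul_pos (by omega) hY') hN'
  have hUC : U ≤ aC := by rw [haC]; exact Nat.le_mul_of_pos_right _ (by omega)
  have hUJ : U ≤ aJ := by
    rw [haJ]
    calc U ≤ U ^ 2 := Nat.le_self_pow (by norm_num) _
      _ = 1 * U ^ 2 * 1 := by ring
      _ ≤ _ := by gcongr; omega
  have c1 : 1 < aC := by omega
  have j1 : 1 < aJ := by omega
  have hC : d.C = Pell.yn c1 (2 * X + 1) := by
    refine index_sound (a := aC) (B := 2 * X + 1) (C := d.C) (E := d.E) (F := d.F) (G := d.G)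
      (H := d.H) (h := d.h) (y := d.y) (x := d.x) c1 (by omega) (by omega) ?_ ?_ rfl hx ?_ hA1
      ?_ ?_ hA2
    · rw [Dat.C, haCn, hXn]; push_cast; ring
    · rw [← haCn]; exact hA0
    · rw [← haCn]; rfl
    · rw [← haCn]; rfl
    · rw [Dat.H, hXn]; push_cast; ring
  rw [haJn] at hA3
  obtain ⟨m, hm, -⟩ := pell_of_isSquare j1 hA3
  have hJ : |d.J| = Pell.yn j1 m := by rw [Int.abs_eq_natAbs, hm]
  have hJm : (aJ : ℤ) - 1 ∣ m - (X + 1) ∨ (aJ : ℤ) - 1 ∣ m + (X + 1) := by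
    have h1 := yn_modEq_int j1 m
    have h2 : d.J = X + 1 + (aJ - 1) * d.k := by rw [Dat.J, haJn, hXn]
    rw [← hJ] at h1
    rcases abs_choice d.J with h | h
    · left
      rw [h, h2] at h1
      obtain ⟨c, hc⟩ := h1
      exact ⟨d.k - c, by linear_combination -hc⟩
    · right
      rw [h, h2] at h1
      obtain ⟨c, hc⟩ := h1
      exact ⟨-d.k - c, by linear_combination -hc⟩
  have hlt := abs_sub_mul_abs (by rw [hC]; positivity) hL0 hCJ
  rw [hC, hJ, Int.abs_eq_natAbs d.L] at hlt
  have hYL : Y ∣ L := by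
    rw [hL, ← Int.natCast_dvd, ← hYn]; exact Dvd.intro_left _ rfl
  obtain ⟨hqe, hYc⟩ := core_sound hX' hN' hY' hq2 hL1 hV hU haC haJ c1 j1 hJm hlt
    (by rw [Dat.S, Dat.T, hqn, hC, haCn] at hST; exact hST) hYL
  refine ⟨hf, hβ, hg, hgN, ?_, ?_⟩
  · have h1 : (d.β * d.w).natAbs ^ 2 = (2 ^ X) ^ 2 := by
      have h3 : 2 ^ (2 * X + 1) = 2 * (2 ^ X) ^ 2 := by ring
      omega
    have h2 := Nat.pow_left_injective (by norm_num : 2 ≠ 0) h1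
    rw [hXn, Int.toNat_natCast, ← Int.natAbs_dvd_natAbs, Int.natAbs_pow]
    exact ⟨d.w.natAbs, by rw [← Int.natAbs_mul, h2]; rfl⟩
  · rw [hXn, Int.toNat_natCast, hYn]; exact_mod_cast hYc

theorem not_isSquare_of_two_mod_four {n : ℤ} (h : n % 4 = 2) : ¬ IsSquare n := by
  rintro ⟨r, rfl⟩
  rcases Int.emod_two_eq_zero_or_one r with hr | hr
  · obtain ⟨s, rfl⟩ := Int.dvd_of_emod_eq_zero hr
    have : 2 * s * (2 * s) = 4 * (s * s) := by ring
    omega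
  · obtain ⟨s, hs⟩ : ∃ s, r = 2 * s + 1 := ⟨r / 2, by omega⟩
    have : r * r = 4 * (s * s + s) + 1 := by rw [hs]; ring
    omega

/-- Conversely the system can be solved. The unknown `v` comes from a Pell equation: `4 R - 2` is not
a square because it is congruent to `2` modulo `4`. -/
theorem bridge_complete {β N0 X Y f g : ℤ} (hβ : β ≠ 0) (hf : f ≠ 0) (hN : 1 ≤ N0) (hX : 2 ≤ X)
    (hY : 1 ≤ Y) (hg : 0 ≤ g) (hgN : g < N0) (h2 : β ∣ 2 ^ X.toNat)
    (hYX : Y ∣ ((2 * X.toNat).choose X.toNat : ℤ)) :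
    ∃ h k l w x y v : ℤ, (Dat.mk β N0 X Y f g h k l w x y v).Good := by
  obtain ⟨X, rfl⟩ := Int.eq_ofNat_of_zero_le (show 0 ≤ X by omega)
  obtain ⟨N0, rfl⟩ := Int.eq_ofNat_of_zero_le (show 0 ≤ N0 by omega)
  obtain ⟨Y, rfl⟩ := Int.eq_ofNat_of_zero_le (show 0 ≤ Y by omega)
  rw [Int.toNat_natCast] at h2 hYX
  have hX' : 2 ≤ X := by omega
  have hN' : 1 ≤ N0 := by omega
  have hY' : 1 ≤ Y := by omega
  obtain ⟨w, hw⟩ := h2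
  have hw0 : w ≠ 0 := by
    rintro rfl
    rw [mul_zero] at hw
    exact absurd hw (by positivity)
  set q : ℕ := 2 ^ (2 * X + 1) with hq
  have hqn : 2 * (β * w) ^ 2 = (q : ℤ) := by
    rw [← hw, hq]; push_cast; ring
  set V : ℕ := 16 * q * Y * N0 with hV
  obtain ⟨L, hL1, hYL, hmain⟩ := core_complete hX' hN' hY' hq hV (by exact_mod_cast hYX)
  obtain ⟨l, hl⟩ := hYL
  have hl0 : l ≠ 0 := by rintro rfl; omega
  set U : ℕ := 48 * N0 * X * (L ^ 2 + 1) with hU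
  set aC : ℕ := U * (V + 1) with haC
  set aJ : ℕ := 2 * U ^ 2 * V with haJ
  have hU1 : 48 * X ≤ U := by
    calc 48 * X = 48 * 1 * X * 1 := by ring
      _ ≤ _ := by rw [hU]; gcongr; omega
  have hV1 : 1 ≤ V := by
    rw [hV]; exact Nat.mul_pos (Nat.mul_pos (by positivity) hY') hN'
  have hUC : U ≤ aC := by rw [haC]; exact Nat.le_mul_of_pos_right _ (by omega)
  have hUJ : U ≤ aJ := by
    rw [haJ]
    calc U ≤ U ^ 2 := Nat.le_self_pow (by norm_num) _
      _ = 1 * U ^ 2 * 1 := by ring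
      _ ≤ _ := by gcongr; omega
  have c1 : 1 < aC := by omega
  have j1 : 1 < aJ := by omega
  have hlt := hmain U aC aJ rfl rfl rfl c1 j1
  obtain ⟨h, x, y, C, E, F, G, H, hCy, hC, hD, hE, hx, hFd, hF, hG, hH, hI⟩ :=
    index_complete (B := 2 * X + 1) c1 (by omega)
  obtain ⟨k, hk⟩ := yn_modEq_int j1 (X + 1)
  set J : ℕ := Pell.yn j1 (X + 1) with hJ
  have hJk : (J : ℤ) = X + 1 + (aJ - 1) * k := by push_cast at hk; linarith
  rw [← hCy] at hlt
  have hRpos : 0 < (2 * g + 1) * (2 * N0 - 2 * g - 1) * (J : ℤ) ^ 2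
      - 16 * (N0 : ℤ) ^ 2 * (C - L * J) ^ 2 := by
    have h3 : 1 ≤ (2 * g + 1) * (2 * N0 - 2 * g - 1) :=
      one_le_mul_of_one_le_of_one_le (by omega) (by omega)
    have h4 : (4 * N0 * (C - L * J)) ^ 2 < (J : ℤ) ^ 2 := by
      rw [sq_lt_sq, abs_mul, abs_of_nonneg (by positivity : (0 : ℤ) ≤ 4 * N0),
        abs_of_nonneg (by positivity : (0 : ℤ) ≤ J)]
      exact hlt
    have h5 := mul_le_mul_of_nonneg_right h3 (sq_nonneg (J : ℤ))
    have h6 : (4 * (N0 : ℤ) * (C - L * J)) ^ 2 = 16 * (N0 : ℤ) ^ 2 * (C - L * J) ^ 2 := by ring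
    linarith
  set R : ℤ := (2 * g + 1) * (2 * N0 - 2 * g - 1) * (J : ℤ) ^ 2
      - 16 * (N0 : ℤ) ^ 2 * (C - L * J) ^ 2 with hR
  obtain ⟨r, v, hv, hv0⟩ := Pell.exists_of_not_isSquare (d := 4 * R - 2) (by omega)
    (not_isSquare_of_two_mod_four (by omega))
  refine ⟨h, k, l, w, x, y, v, ?_⟩
  set d := Dat.mk β N0 X Y f g h k l w x y v with hd
  have dL : d.L = L := by rw [hl]; simp only [Dat.L, hd]; push_cast; ring
  have dq : d.q = q := hqn
  have dV : d.V = V := by rw [Dat.V, dq, hV]; push_cast; rfl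
  have dU : d.U = U := by rw [Dat.U, dL, hU]; push_cast; rfl
  have daC : d.aC = aC := by rw [Dat.aC, dU, dV, haC]; push_cast; rfl
  have daJ : d.aJ = aJ := by rw [Dat.aJ, dU, dV, haJ]; push_cast; rfl
  have dC : d.C = C := by rw [Dat.C, daC, hC]; push_cast; rfl
  have dE : d.E = E := by rw [Dat.E, dC, hE]
  have dF : d.F = F := by rw [Dat.F, daC, dE, hFd]
  have dG : d.G = G := by rw [Dat.G, daC, dF, hG]
  have dH : d.H = H := by rw [Dat.H, dC, dF, hH]; push_cast; rfl
  have dJ : d.J = J := by rw [Dat.J, daJ, hJk]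
  have dR : d.R = R := by rw [Dat.R, dC, dJ, dL]
  refine ⟨?_, ?_, ?_⟩
  · intro i
    fin_cases i
    · change IsSquare ((d.aC ^ 2 - 1) * d.C ^ 2 + 1)
      rw [daC, dC]; exact hD
    · change IsSquare d.F
      rw [dF]; exact hF
    · change IsSquare ((d.G ^ 2 - 1) * d.H ^ 2 + 1)
      rw [dG, dH]; exact hI
    · change IsSquare ((d.aJ ^ 2 - 1) * d.J ^ 2 + 1)
      rw [daJ, dJ, hJ, pell_eq_int j1]; exact IsSquare.sq _
    · change IsSquare ((4 * d.R - 2) * v ^ 2 + 1)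
      rw [dR]; exact ⟨r, by linarith⟩
  · rw [Dat.S, Dat.T, daC, dC, dq, hCy]
    have := yn_two_pow c1 (2 * X + 1)
    rw [hq]; push_cast
    rwa [show ((2 : ℤ) ^ (2 * X + 1)) ^ 2 = 4 ^ (2 * X + 1) by rw [← pow_mul, mul_comm, pow_mul]; norm_num]
  · simp only [Dat.Bnz, hd, mul_ne_zero_iff]
    exact ⟨⟨⟨⟨⟨hv0, hx⟩, hw0⟩, by exact_mod_cast hl0⟩, hβ⟩, hf⟩

end UPair

namespace UPair

/-! ### Combining square conditions into one equation -/

section Norm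

variable (n : ℕ)

/-- The product of `t + Σ ± s_i` over all choices of signs, where `t` is the variable `none` and
`s_i` the variable `some i`. -/
noncomputable def signProd : MvPolynomial (Option (Fin n)) ℤ :=
  ∏ ε : Fin n → ℤˣ, (X none + ∑ i, C (ε i : ℤ) * X (some i))

variable {n}

/-- Halving all the exponents except that of the variable `none`. -/
noncomputable def halve (m : Option (Fin n) →₀ ℕ) : Option (Fin n) →₀ ℕ :=
  Finsupp.equivFunOnFinite.symm fun o => o.elim (m none) fun i => m (some i) / 2

variable (n)

/-- The product of `t + Σ ± s_i` over all choices of signs, as a polynomial in `t` and the squares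
`s_i ^ 2`. -/
noncomputable def NP : MvPolynomial (Option (Fin n)) ℤ :=
  ∑ m ∈ (signProd n).support, monomial (halve m) (coeff m (signProd n))

theorem totalDegree_signProd : (signProd n).totalDegree ≤ 2 ^ n := by
  refine (totalDegree_finsetProd _ _).trans ?_
  have h : ∀ ε : Fin n → ℤˣ,
      (X none + ∑ i, C (ε i : ℤ) * X (some i) : MvPolynomial (Option (Fin n)) ℤ).totalDegree
        ≤ 1 := by
    intro ε
    refine (totalDegree_add _ _).trans (max_le (totalDegree_X _).le ?_)
    refine totalDegree_finsetSum_le fun i _ => ?_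
    refine (totalDegree_mul _ _).trans ?_
    rw [totalDegree_C, totalDegree_X]
  refine (Finset.sum_le_sum fun ε _ => h ε).trans ?_
  simp

theorem totalDegree_NP : (NP n).totalDegree ≤ 2 ^ n := by
  refine totalDegree_finsetSum_le fun m hm => (totalDegree_monomial_le _ _).trans ?_
  refine le_trans ?_ ((le_totalDegree hm).trans (totalDegree_signProd n))
  rw [Finsupp.sum_fintype _ _ (fun _ => rfl), Finsupp.sum_fintype _ _ (fun _ => rfl)]
  refine Finset.sum_le_sum fun o _ => ?_
  cases o with
  | none => exact le_rfl
  | some i => exact Nat.div_le_self _ _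

variable {n}

/-- Changing the sign of one variable multiplies each coefficient by a power of `-1`. -/
theorem coeff_flip {σ : Type*} [DecidableEq σ] (o : σ) (p : MvPolynomial σ ℤ) (m : σ →₀ ℕ) :
    coeff m (aeval (fun j => if j = o then -X j else (X j : MvPolynomial σ ℤ)) p)
      = (-1) ^ m o * coeff m p := by
  induction p using MvPolynomial.induction_on' with
  | monomial u a =>
    have h : aeval (fun j => if j = o then -X j else (X j : MvPolynomial σ ℤ)) (monomial u a)
        = (-1 : MvPolynomial σ ℤ) ^ u o * monomial u a := by
      rw [aeval_monomial, monomial_eq, algebraMap_eq]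
      have h1 : (u.prod fun i k => (if i = o then -X i else (X i : MvPolynomial σ ℤ)) ^ k)
          = (u.prod fun i k => (if i = o then (-1 : MvPolynomial σ ℤ) else 1) ^ k)
            * u.prod fun i k => X i ^ k := by
        rw [← Finsupp.prod_mul]
        refine Finsupp.prod_congr fun i _ => ?_
        rw [← mul_pow]; split_ifs <;> simp
      have h2 : (u.prod fun i k => (if i = o then (-1 : MvPolynomial σ ℤ) else 1) ^ k)
          = (-1) ^ u o := by
        rw [Finsupp.prod, Finset.prod_eq_single o]
        · simp
        · intro b _ hb; simp [hb]
        · intro ho; simp [Finsupp.notMem_support_iff.1 ho]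
      rw [h1, h2]; ring
    have h2 : (-1 : MvPolynomial σ ℤ) ^ u o = C ((-1) ^ u o) := by simp
    rw [h, h2, coeff_C_mul, coeff_monomial]
    split_ifs with hum
    · rw [hum]
    · simp
  | add p q hp hq => rw [map_add, coeff_add, hp, hq, coeff_add]; ring

theorem flip_signProd (i : Fin n) :
    aeval (fun j => if j = some i then -X j else (X j : MvPolynomial (Option (Fin n)) ℤ))
      (signProd n) = signProd n := by
  unfold signProd
  rw [map_prod]
  refine Fintype.prod_equiv (Equiv.mulRight (Pi.mulSingle i (-1))) _ _ fun ε => ?_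
  simp only [map_add, map_sum, map_mul, aeval_X, Equiv.coe_mulRight, Pi.mul_apply]
  congr 1
  refine Finset.sum_congr rfl fun j _ => ?_
  have hC : ∀ c : ℤ, aeval (fun j => if j = some i then -X j else
    (X j : MvPolynomial (Option (Fin n)) ℤ)) (C c) = C c := fun c => by simp
  rw [hC]
  by_cases hj : j = i
  · subst hj; simp
  · rw [Pi.mulSingle_eq_of_ne hj]; simp [hj]

theorem even_exponent {m : Option (Fin n) →₀ ℕ} (hm : m ∈ (signProd n).support) (i : Fin n) :
    2 ∣ m (some i) := by
  have h := coeff_flip (some i) (signProd n) m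
  rw [flip_signProd] at h
  have h0 := mem_support_iff.1 hm
  rcases Nat.even_or_odd (m (some i)) with he | ho
  · exact he.two_dvd
  · rw [ho.neg_one_pow] at h; omega

theorem aeval_NP {R : Type*} [CommRing R] (t : R) (s : Fin n → R) :
    aeval (fun o : Option (Fin n) => o.elim t fun i => s i ^ 2) (NP n)
      = ∏ ε : Fin n → ℤˣ, (t + ∑ i, ((ε i : ℤ) : R) * s i) := by
  have h1 : aeval (fun o : Option (Fin n) => o.elim t s) (signProd n)
      = ∏ ε : Fin n → ℤˣ, (t + ∑ i, ((ε i : ℤ) : R) * s i) := by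
    unfold signProd
    simp [map_prod]
  rw [← h1]
  conv_rhs => rw [← support_sum_monomial_coeff (signProd n)]
  rw [NP, map_sum, map_sum]
  refine Finset.sum_congr rfl fun m hm => ?_
  rw [aeval_monomial, aeval_monomial, Finsupp.prod_fintype _ _ (fun _ => pow_zero _),
    Finsupp.prod_fintype _ _ (fun _ => pow_zero _), Fintype.prod_option, Fintype.prod_option]
  congr 2
  refine Finset.prod_congr rfl fun i _ => ?_
  change (s i ^ 2) ^ (m (some i) / 2) = s i ^ m (some i)
  rw [← pow_mul, Nat.mul_div_cancel' (even_exponent hm i)]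

theorem cast_eval_NP {R : Type*} [CommRing R] (t : ℤ) (b : Fin n → ℤ) (s : Fin n → R)
    (hs : ∀ i, s i ^ 2 = b i) :
    ((eval (fun o : Option (Fin n) => o.elim t b) (NP n) : ℤ) : R)
      = ∏ ε : Fin n → ℤˣ, ((t : R) + ∑ i, ((ε i : ℤ) : R) * s i) := by
  rw [← aeval_NP, aeval_def, ← eq_intCast (Int.castRingHom R), ← coe_eval₂Hom, coe_eval₂Hom, eval,
    coe_eval₂Hom, eval₂_comp_left]
  have h : (⇑(Int.castRingHom R) ∘ fun o : Option (Fin n) => o.elim t b)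
      = fun o : Option (Fin n) => o.elim (t : R) fun i => s i ^ 2 := by
    funext o; cases o with
    | none => rfl
    | some i => exact (hs i).symm
  rw [h]; rfl

end Norm

/-- A base-`W` expansion with digits that are zero or of size at least one, and less than `W`,
determines its digits when it vanishes. -/
theorem digits_zero {W : ℝ} (hW : 1 ≤ W) : ∀ (n : ℕ) (e : Fin n → ℂ), (∀ i, ‖e i‖ ≤ W - 1) →
    (∀ i, e i = 0 ∨ 1 ≤ ‖e i‖) → ∑ i, e i * (W : ℂ) ^ (i : ℕ) = 0 → ∀ i, e i = 0 := by
  have hb : ∀ (n : ℕ) (e : Fin n → ℂ), (∀ i, ‖e i‖ ≤ W - 1) →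
      ‖∑ i, e i * (W : ℂ) ^ (i : ℕ)‖ ≤ W ^ n - 1 := by
    intro n
    induction n with
    | zero => intro e _; simp
    | succ n ih =>
      intro e he
      rw [Fin.sum_univ_castSucc]
      refine (norm_add_le _ _).trans ?_
      have h1 := ih (fun i => e i.castSucc) fun i => he _
      have h2 : ‖e (Fin.last n) * (W : ℂ) ^ n‖ ≤ (W - 1) * W ^ n := by
        rw [norm_mul, norm_pow, Complex.norm_of_nonneg (by linarith)]
        exact mul_le_mul_of_nonneg_right (he _) (by positivity)
      simp only [Fin.val_castSucc, Fin.val_last]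
      rw [pow_succ]; linarith
  intro n
  induction n with
  | zero => intro e _ _ _ i; exact i.elim0
  | succ n ih =>
    intro e he he' h
    rw [Fin.sum_univ_castSucc] at h
    simp only [Fin.val_castSucc, Fin.val_last] at h
    have h1 := hb n (fun i => e i.castSucc) fun i => he _
    have h0 : e (Fin.last n) = 0 := by
      refine (he' (Fin.last n)).resolve_right fun h2 => ?_
      have h3 : ‖e (Fin.last n) * (W : ℂ) ^ n‖ ≤ W ^ n - 1 := by
        rw [eq_neg_of_add_eq_zero_right h, norm_neg]; exact h1
      rw [norm_mul, norm_pow, Complex.norm_of_nonneg (by linarith)] at h3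
      have : 0 < W ^ n := by positivity
      nlinarith
    rw [h0, zero_mul, add_zero] at h
    have h4 := ih (fun i => e i.castSucc) (fun i => he _) (fun i => he' _) h
    intro i
    refine Fin.lastCases h0 (fun i => h4 i) i

/-- Integers with rapidly growing weights are all squares as soon as a weighted sum of their square
roots is rational: an automorphism changing the sign of one of the square roots would give a
nontrivial relation between the remaining ones. -/
theorem isSquare_of_sum_rational {Ω : Type*} [Field Ω] [Algebra ℚ Ω] [IsAlgClosure ℚ Ω] {n : ℕ}
    (A : Fin n → ℤ) (W : ℤ) (hW : W = 1 + ∑ i, A i ^ 2)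
    (r : Fin n → Ω) (hr : ∀ i, r i ^ 2 = A i) (c : ℚ)
    (hc : ∑ i, r i * (W : Ω) ^ (i : ℕ) = c) :
    ∀ i, IsSquare (A i) := by
  intro j
  have halg : Algebra.IsAlgebraic ℚ Ω := IsAlgClosure.isAlgebraic
  have hchar : CharZero Ω := algebraRat.charZero Ω
  have hfix : ∀ φ : Ω ≃ₐ[ℚ] Ω, φ (r j) = r j := by
    intro φ
    let ι : Ω →ₐ[ℚ] ℂ := IsAlgClosed.lift
    -- each conjugate square root is `±` the original one
    have hφ : ∀ i, φ (r i) = r i ∨ φ (r i) = -r i := by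
      intro i
      rw [← sq_eq_sq_iff_eq_or_eq_neg, ← map_pow, hr, map_intCast]
    have hA2 : ∀ i, (A i) ^ 2 ≤ W - 1 := by
      intro i
      have := Finset.single_le_sum (f := fun i => A i ^ 2) (fun i _ => sq_nonneg (A i))
        (Finset.mem_univ i)
      linarith
    have hW1 : (1 : ℝ) ≤ W := by
      have := (sq_nonneg (A j)).trans (hA2 j)
      exact_mod_cast (by linarith : (1 : ℤ) ≤ W)
    have hnorm : ∀ i, ‖ι (r i)‖ ^ 2 = |(A i : ℝ)| := by
      intro i
      rw [← norm_pow, ← map_pow, hr, map_intCast, Complex.norm_intCast]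
    have hnorm1 : ∀ i, ‖ι (r i)‖ ≤ W - 1 := by
      intro i
      have h1 : |(A i : ℝ)| ≤ W - 1 := by
        have h2 : |A i| ≤ A i ^ 2 := by
          rw [← sq_abs]
          rcases (abs_nonneg (A i)).eq_or_lt with h | h
          · rw [← h]; norm_num
          · nlinarith
        exact_mod_cast h2.trans (hA2 i)
      rcases le_or_gt 1 ‖ι (r i)‖ with h | h
      · rw [← hnorm] at h1; nlinarith
      · have h3 : |A i| < 1 := by
          have : |(A i : ℝ)| < 1 := by rw [← hnorm]; nlinarith [norm_nonneg (ι (r i))]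
          exact_mod_cast this
        have h4 := hnorm i
        rw [Int.abs_lt_one_iff.1 h3] at h4
        have h5 : ‖ι (r i)‖ = 0 := by simpa using h4
        rw [h5]; linarith
    have hnorm2 : ∀ i, ι (r i) = 0 ∨ 1 ≤ ‖ι (r i)‖ := by
      intro i
      rcases eq_or_ne (A i) 0 with h | h
      · left
        have h4 := hnorm i
        rw [h] at h4
        simpa using h4
      · right
        have h1 : (1 : ℝ) ≤ |(A i : ℝ)| := by exact_mod_cast Int.one_le_abs h
        rw [← hnorm] at h1
        nlinarith [norm_nonneg (ι (r i))]
    have hsum : ∑ i, (r i - φ (r i)) * (W : Ω) ^ (i : ℕ) = 0 := by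
      have h1 := congrArg φ hc
      rw [map_sum, map_ratCast] at h1
      simp only [map_mul, map_pow, map_intCast] at h1
      simp only [sub_mul, Finset.sum_sub_distrib]
      rw [h1, hc, sub_self]
    have hz := digits_zero hW1 n (fun i => ι ((r i - φ (r i)) / 2))
      (fun i => by
        rcases hφ i with h | h
        · simp only [h, sub_self, zero_div, map_zero, norm_zero]; linarith
        · simp only [h, sub_neg_eq_add, add_self_div_two]; exact hnorm1 i)
      (fun i => by
        rcases hφ i with h | h
        · left; simp [h]
        · simp only [h, sub_neg_eq_add, add_self_div_two]; exact hnorm2 i)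
      (by
        have h1 := congrArg (fun z => ι (z / 2)) hsum
        simp only [zero_div, map_zero, Finset.sum_div, map_sum] at h1
        rw [← h1]
        refine Finset.sum_congr rfl fun i _ => ?_
        rw [mul_div_right_comm, map_mul, map_pow, map_intCast]
        norm_cast)
      j
    have h1 := (map_eq_zero ι).1 hz
    rw [div_eq_zero_iff] at h1
    exact (sub_eq_zero.1 (h1.resolve_right (by norm_num))).symm
  obtain ⟨b, hb⟩ := (InfiniteGalois.mem_range_algebraMap_iff_fixed (r j)).2 hfix
  rw [← Rat.isSquare_intCast_iff]
  refine ⟨b, ?_⟩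
  have h := hr j
  rw [← hb, ← map_pow] at h
  have h' : algebraMap ℚ (Ω) (b ^ 2) = algebraMap ℚ _ (A j : ℚ) := by
    rw [h, map_intCast]
  rw [← sq]
  exact ((algebraMap ℚ (Ω)).injective h').symm

/-- This encodes `B ≠ 0` by divisibility, since the product on the right never vanishes. The odd part of
`B` is made to divide the first factor, the power of two in `B` the second. -/
theorem exists_dvd_product {B : ℤ} (hB : B ≠ 0) :
    ∃ ρ : ℤ, B ∣ (2 * ρ + 1) * (3 * ρ + 1) := by
  obtain ⟨k, m, hm, hBm⟩ := Nat.exists_eq_two_pow_mul_odd (Int.natAbs_ne_zero.2 hB)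
  obtain ⟨c, hc⟩ := hm
  have h1 : IsCoprime ((2 : ℤ) ^ k) (2 * c + 1) :=
    IsCoprime.pow_left ⟨-c, 1, by ring⟩
  have h2 : IsCoprime (3 : ℤ) (2 ^ k) := IsCoprime.pow_right ⟨1, -1, by ring⟩
  obtain ⟨u, v, huv⟩ := h1
  obtain ⟨x, z, hxz⟩ := h2
  refine ⟨-(x * v * (2 * c + 1)) + c * u * 2 ^ k, ?_⟩
  rw [← Int.natAbs_dvd, hBm, hc]
  push_cast
  rw [mul_comm ((2 : ℤ) ^ k)]
  refine mul_dvd_mul ⟨1 - 2 * v * (c + x), ?_⟩ ⟨z + 3 * u * (x + c), ?_⟩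
  · linear_combination 2 * c * huv
  · linear_combination (-3 * x) * huv - hxz

theorem isAlgClosure_algebraicClosure (K : Type*) [Field K] : IsAlgClosure K (AlgebraicClosure K) :=
  inferInstance

/-- The general instance is about a `ℚ`-algebra structure that is not syntactically the default
one. -/
instance : IsAlgClosure ℚ (AlgebraicClosure ℚ) := by
  convert isAlgClosure_algebraicClosure ℚ
  · rfl
  · exact Subsingleton.elim (α := Algebra ℚ (AlgebraicClosure ℚ)) _ _

/-- Whether `S` divides `T` can be read off from one divisibility by `S ^ 2`. -/
theorem dvd_of_sq_dvd {S τ : ℤ} (h2 : ¬ 2 ∣ S) (h3 : ¬ 3 ∣ S)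
    (h : S ^ 2 ∣ (2 * τ + S) * (3 * τ + S)) : S ∣ τ := by
  have h5 : S ^ 2 ∣ (12 * τ + 5 * S) ^ 2 := by
    have e : (12 * τ + 5 * S) ^ 2 = 24 * ((2 * τ + S) * (3 * τ + S)) + S ^ 2 := by ring
    rw [e]
    exact dvd_add (h.mul_left _) dvd_rfl
  have h6 : S ∣ 12 * τ + 5 * S := (Int.pow_dvd_pow_iff (by norm_num)).1 h5
  have h7 : S ∣ 12 * τ := (dvd_add_left (Dvd.intro_left 5 rfl)).1 h6
  have c2 : IsCoprime S 2 := by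
    rw [isCoprime_comm]; exact (Int.prime_two.coprime_iff_not_dvd).2 h2
  have c3 : IsCoprime S 3 := by
    rw [isCoprime_comm]; exact (Int.prime_three.coprime_iff_not_dvd).2 h3
  have c12 : IsCoprime S 12 := by
    have := (c2.mul_right c2).mul_right c3
    norm_num at this; exact this
  exact c12.dvd_of_dvd_mul_left h7

/-- The argument of the norm polynomial. -/
def comT (S T B p n : ℤ) : ℤ :=
  S ^ 2 * B * n - (2 * (S * p + T) + S) * (3 * (S * p + T) + S)

/-- Several square conditions, one divisibility and one inequation are together equivalent to the
solvability of a single equation in two additional unknowns. -/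
theorem combine {q : ℕ} (A : Fin q → ℤ) {S T B : ℤ} (h2 : ¬ 2 ∣ S) (h3 : ¬ 3 ∣ S) :
    ((∀ i, IsSquare (A i)) ∧ S ∣ T ∧ B ≠ 0) ↔
      ∃ p n : ℤ, eval (fun o : Option (Fin q) => o.elim (comT S T B p n) fun i =>
        (S ^ 2 * B) ^ 2 * A i * (1 + ∑ i, A i ^ 2) ^ (2 * (i : ℕ))) (NP q) = 0 := by
  set W := 1 + ∑ i, A i ^ 2 with hW
  have hS0 : S ≠ 0 := by rintro rfl; exact h2 (dvd_zero _)
  constructor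
  · rintro ⟨hA, ⟨T', rfl⟩, hB⟩
    choose r hr using hA
    obtain ⟨ρ, n, hρ⟩ := exists_dvd_product hB
    refine ⟨ρ - T', n - ∑ i, r i * W ^ (i : ℕ), ?_⟩
    have h := cast_eval_NP (R := ℤ)
      (comT S (S * T') B (ρ - T') (n - ∑ i, r i * W ^ (i : ℕ)))
      (fun i => (S ^ 2 * B) ^ 2 * A i * W ^ (2 * (i : ℕ)))
      (fun i => S ^ 2 * B * r i * W ^ (i : ℕ))
      (fun i => by rw [hr i, Int.cast_id]; ring)
    rw [Int.cast_id] at h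
    rw [h]
    refine Finset.prod_eq_zero (Finset.mem_univ 1) ?_
    have e : ∑ i, S ^ 2 * B * r i * W ^ (i : ℕ) = S ^ 2 * B * ∑ i, r i * W ^ (i : ℕ) := by
      rw [Finset.mul_sum]; exact Finset.sum_congr rfl fun i _ => by ring
    simp only [Pi.one_apply, Units.val_one, Int.cast_one, one_mul, Int.cast_id]
    rw [e, comT]
    linear_combination (-S ^ 2) * hρ
  · rintro ⟨p, n, h⟩
    -- the square roots of the `A i` in an algebraic closure
    have hroot : ∀ i, ∃ r : AlgebraicClosure ℚ, r ^ 2 = A i := fun i =>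
      IsAlgClosed.exists_pow_nat_eq _ (by norm_num)
    choose r hr using hroot
    have h1 := cast_eval_NP (R := AlgebraicClosure ℚ) (comT S T B p n)
      (fun i => (S ^ 2 * B) ^ 2 * A i * W ^ (2 * (i : ℕ)))
      (fun i => ((S ^ 2 * B : ℤ) : AlgebraicClosure ℚ) * r i * (W : AlgebraicClosure ℚ) ^ (i : ℕ))
      (fun i => by push_cast; rw [← hr i]; ring)
    rw [h, Int.cast_zero] at h1
    obtain ⟨ε, -, hε⟩ := Finset.prod_eq_zero_iff.1 h1.symm
    set r' : Fin q → AlgebraicClosure ℚ := fun i => ((ε i : ℤ) : AlgebraicClosure ℚ) * r i with hr'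
    have hr'2 : ∀ i, r' i ^ 2 = A i := by
      intro i
      have : ((ε i : ℤ) : AlgebraicClosure ℚ) ^ 2 = 1 := by
        rcases Int.units_eq_one_or (ε i) with h | h <;> simp [h]
      rw [hr', mul_pow, this, one_mul, hr]
    have hsum : (comT S T B p n : AlgebraicClosure ℚ) + ((S ^ 2 * B : ℤ) : AlgebraicClosure ℚ) *
        ∑ i, r' i * (W : AlgebraicClosure ℚ) ^ (i : ℕ) = 0 := by
      rw [← hε, Finset.mul_sum]
      congr 1
      exact Finset.sum_congr rfl fun i _ => by rw [hr']; ring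
    have hB : B ≠ 0 := by
      rintro rfl
      have h4 : comT S T 0 p n = 0 := by simpa using hsum
      have h5 : (2 * (S * p + T) + S) * (3 * (S * p + T) + S) = 0 := by
        unfold comT at h4; linarith
      rcases mul_eq_zero.1 h5 with h6 | h6
      · exact h2 ⟨-(S * p + T), by linarith⟩
      · exact h3 ⟨-(S * p + T), by linarith⟩
    have hK : S ^ 2 * B ≠ 0 := mul_ne_zero (pow_ne_zero _ hS0) hB
    have hA : ∀ i, IsSquare (A i) := by
      refine isSquare_of_sum_rational (Ω := AlgebraicClosure ℚ) A W hW r' hr'2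
        (-(comT S T B p n) / (S ^ 2 * B : ℤ) : ℚ) ?_
      have hK' : ((S ^ 2 * B : ℤ) : AlgebraicClosure ℚ) ≠ 0 := by exact_mod_cast hK
      rw [Rat.cast_div, Rat.cast_neg, Rat.cast_intCast, Rat.cast_intCast, eq_div_iff hK']
      linear_combination hsum
    refine ⟨hA, ?_, hB⟩
    have hb : ∀ i, ∃ b : ℤ, r' i = b := by
      intro i
      obtain ⟨b, hb⟩ := hA i
      have h4 : r' i ^ 2 = (b : AlgebraicClosure ℚ) ^ 2 := by
        rw [hr'2, hb]; push_cast; ring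
      rcases sq_eq_sq_iff_eq_or_eq_neg.1 h4 with h5 | h5
      · exact ⟨b, h5⟩
      · exact ⟨-b, by rw [h5]; push_cast; rfl⟩
    choose b hb using hb
    simp only [hb] at hsum
    have hsum' : comT S T B p n + S ^ 2 * B * ∑ i, b i * W ^ (i : ℕ) = 0 := by
      exact_mod_cast hsum
    have h7 : S ∣ S * p + T := by
      refine dvd_of_sq_dvd h2 h3 ⟨B * (n + ∑ i, b i * W ^ (i : ℕ)), ?_⟩
      unfold comT at hsum'
      linear_combination (-1 : ℤ) * hsum'
    exact (dvd_add_right (Dvd.intro p rfl)).1 h7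

end UPair

/-! ### Degrees -/

namespace UPair

/-- The function `F` on `σ → ℤ` is a polynomial function of total degree at most `d`. -/
def PF {σ : Type*} (d : ℕ) (F : (σ → ℤ) → ℤ) : Prop :=
  ∃ p : MvPolynomial σ ℤ, p.totalDegree ≤ d ∧ ∀ x, eval x p = F x

namespace PF

variable {σ : Type*} {d e : ℕ} {F G : (σ → ℤ) → ℤ}

theorem mono (h : PF d F) (hde : d ≤ e) : PF e F :=
  let ⟨p, hp, hF⟩ := h
  ⟨p, hp.trans hde, hF⟩

theorem const (c : ℤ) : PF 0 fun _ : σ → ℤ => c :=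
  ⟨C c, (totalDegree_C c).le, fun x => by simp⟩

theorem var (i : σ) : PF 1 fun x : σ → ℤ => x i :=
  ⟨X i, (totalDegree_X i).le, fun x => by simp⟩

theorem add (hF : PF d F) (hG : PF e G) : PF (max d e) fun x => F x + G x :=
  let ⟨p, hp, hF⟩ := hF
  let ⟨q, hq, hG⟩ := hG
  ⟨p + q, (totalDegree_add p q).trans (max_le_max hp hq), fun x => by simp [hF, hG]⟩

theorem sub (hF : PF d F) (hG : PF e G) : PF (max d e) fun x => F x - G x :=
  let ⟨p, hp, hF⟩ := hF
  let ⟨q, hq, hG⟩ := hG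
  ⟨p - q, (totalDegree_sub p q).trans (max_le_max hp hq), fun x => by simp [hF, hG]⟩

theorem mul (hF : PF d F) (hG : PF e G) : PF (d + e) fun x => F x * G x :=
  let ⟨p, hp, hF⟩ := hF
  let ⟨q, hq, hG⟩ := hG
  ⟨p * q, (totalDegree_mul p q).trans (add_le_add hp hq), fun x => by simp [hF, hG]⟩

theorem pow (hF : PF d F) (k : ℕ) : PF (k * d) fun x => F x ^ k :=
  let ⟨p, hp, hF⟩ := hF
  ⟨p ^ k, (totalDegree_pow p k).trans (Nat.mul_le_mul_left k hp), fun x => by simp [hF]⟩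

theorem cmul (c : ℤ) (hF : PF d F) : PF d fun x => c * F x :=
  ((const c).mul hF).mono (by omega)

theorem sum {ι : Type*} {s : Finset ι} {H : ι → (σ → ℤ) → ℤ} (h : ∀ i ∈ s, PF d (H i)) :
    PF d fun x => ∑ i ∈ s, H i x := by
  classical
  induction s using Finset.induction_on with
  | empty => simpa using (const 0).mono (Nat.zero_le d)
  | insert i s hi ih =>
    simp only [Finset.sum_insert hi]
    exact ((h i (Finset.mem_insert_self i s)).add
      (ih fun j hj => h j (Finset.mem_insert_of_mem hj))).mono (by simp)

/-- Substituting polynomial functions of degree at most `d` multiplies degrees by at most `d`. -/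
theorem comp {τ : Type*} {H : τ → (σ → ℤ) → ℤ} (h : ∀ t, PF d (H t)) (P : MvPolynomial τ ℤ) :
    PF (P.totalDegree * d) fun x => eval (fun t => H t x) P := by
  have key : ∀ m ∈ P.support, PF (P.totalDegree * d)
      fun x => coeff m P * ∏ t ∈ m.support, H t x ^ m t := by
    intro m hm
    have h1 : ∀ s : Finset τ, PF ((∑ t ∈ s, m t) * d) fun x => ∏ t ∈ s, H t x ^ m t := by
      classical
      intro s
      induction s using Finset.induction_on with
      | empty => simpa using const (σ := σ) 1
      | insert t s ht ih =>
        simp only [Finset.prod_insert ht, Finset.sum_insert ht, add_mul]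
        exact ((h t).pow (m t)).mul ih
    exact ((h1 m.support).cmul _).mono (Nat.mul_le_mul_right d (le_totalDegree hm))
  simp only [eval_eq]
  exact sum key

end PF

section
variable {σ : Type*} {D : ℕ} {dd : (σ → ℤ) → Dat}

/-- The degree of the norm polynomial evaluated at the data of the system, when all the components
of the data have degree at most `D`. -/
theorem PF_system (hD : 1 ≤ D) (hβ : PF D fun x => (dd x).β) (hN : PF D fun x => (dd x).N0)
    (hX : PF D fun x => (dd x).X) (hY : PF D fun x => (dd x).Y) (hf : PF D fun x => (dd x).f)
    (hg : PF D fun x => (dd x).g) (hh : PF D fun x => (dd x).h) (hk : PF D fun x => (dd x).k)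
    (hl : PF D fun x => (dd x).l) (hw : PF D fun x => (dd x).w) (hx : PF D fun x => (dd x).x)
    (hy : PF D fun x => (dd x).y) (hv : PF D fun x => (dd x).v)
    {p n : (σ → ℤ) → ℤ} (hp : PF D p) (hn : PF D n) :
    PF (32 * (10000 * D)) fun x => eval (fun o : Option (Fin 5) =>
      o.elim (comT (dd x).S (dd x).T (dd x).Bnz (p x) (n x)) fun i =>
        ((dd x).S ^ 2 * (dd x).Bnz) ^ 2 * (dd x).A i *
          (1 + ∑ i, (dd x).A i ^ 2) ^ (2 * (i : ℕ))) (NP 5) := by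
  have hL : PF (2 * D) fun x => (dd x).L := (hl.mul hY).mono (by omega)
  have hq : PF (4 * D) fun x => (dd x).q := (((hβ.mul hw).pow 2).cmul 2).mono (by omega)
  have hV : PF (6 * D) fun x => (dd x).V := (((hq.cmul 16).mul hY).mul hN).mono (by omega)
  have hU : PF (6 * D) fun x => (dd x).U :=
    (((hN.cmul 48).mul hX).mul ((hL.pow 2).add (.const 1))).mono (by omega)
  have haC : PF (12 * D) fun x => (dd x).aC := (hU.mul (hV.add (.const 1))).mono (by omega)
  have haJ : PF (18 * D) fun x => (dd x).aJ := (((hU.pow 2).cmul 2).mul hV).mono (by omega)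
  have hB : PF D fun x => 2 * (dd x).X + 1 := ((hX.cmul 2).add (.const 1)).mono (by omega)
  have hC : PF (13 * D) fun x => (dd x).C :=
    (hB.add ((haC.sub (.const 1)).mul hh)).mono (by omega)
  have hE : PF (27 * D) fun x => (dd x).E := (((hC.pow 2).cmul 2).mul hx).mono (by omega)
  have hF : PF (78 * D) fun x => (dd x).F :=
    ((((haC.pow 2).sub (.const 1)).mul (hE.pow 2)).add (.const 1)).mono (by omega)
  have hG : PF (156 * D) fun x => (dd x).G := (haC.add (hF.mul (hF.sub haC))).mono (by omega)
  have hH : PF (92 * D) fun x => (dd x).H :=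
    (hC.add (hF.mul ((hB.sub hC).add ((hC.cmul 2).mul hy)))).mono (by omega)
  have hJ : PF (19 * D) fun x => (dd x).J :=
    ((hX.add (.const 1)).add ((haJ.sub (.const 1)).mul hk)).mono (by omega)
  have hR : PF (44 * D) fun x => (dd x).R :=
    (((((hg.cmul 2).add (.const 1)).mul (((hN.cmul 2).sub (hg.cmul 2)).sub (.const 1))).mul
      (hJ.pow 2)).sub (((hN.pow 2).cmul 16).mul ((hC.sub (hL.mul hJ)).pow 2))).mono (by omega)
  have hA : ∀ i, PF (496 * D) fun x => (dd x).A i := by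
    intro i
    fin_cases i
    · exact ((((haC.pow 2).sub (.const 1)).mul (hC.pow 2)).add (.const 1)).mono (by omega)
    · exact hF.mono (by omega)
    · exact ((((hG.pow 2).sub (.const 1)).mul (hH.pow 2)).add (.const 1)).mono (by omega)
    · exact ((((haJ.pow 2).sub (.const 1)).mul (hJ.pow 2)).add (.const 1)).mono (by omega)
    · exact ((((hR.cmul 4).sub (.const 2)).mul (hv.pow 2)).add (.const 1)).mono (by omega)
  have hS : PF (12 * D) fun x => (dd x).S := ((haC.cmul 4).sub (.const 5)).mono (by omega)
  have hT : PF (17 * D) fun x => (dd x).T :=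
    (((hq.cmul 3).mul hC).sub (((hq.pow 2).sub (.const 1)).cmul 2)).mono (by omega)
  have hBnz : PF (6 * D) fun x => (dd x).Bnz :=
    (((((hv.mul hx).mul hw).mul hl).mul hβ).mul hf).mono (by omega)
  have hW : PF (992 * D) fun x => 1 + ∑ i, (dd x).A i ^ 2 :=
    ((PF.const 1).add (PF.sum fun i _ => (hA i).pow 2)).mono (by omega)
  have hm : PF (17 * D) fun x => (dd x).S * p x + (dd x).T := ((hS.mul hp).add hT).mono (by omega)
  have h := PF.comp (σ := σ) (d := 10000 * D) (τ := Option (Fin 5))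
    (H := fun o x => o.elim (comT (dd x).S (dd x).T (dd x).Bnz (p x) (n x)) fun i =>
        ((dd x).S ^ 2 * (dd x).Bnz) ^ 2 * (dd x).A i *
          (1 + ∑ i, (dd x).A i ^ 2) ^ (2 * (i : ℕ))) ?_ (NP 5)
  · exact h.mono (Nat.mul_le_mul_right _ (totalDegree_NP 5))
  · intro o
    cases o with
    | none =>
      exact ((((hS.pow 2).mul hBnz).mul hn).sub
        (((hm.cmul 2).add hS).mul ((hm.cmul 3).add hS))).mono (by omega)
    | some i =>
      refine (((((hS.pow 2).mul hBnz).pow 2).mul (hA i)).mul (hW.pow (2 * (i : ℕ)))).mono ?_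
      have h1 : 2 * (i : ℕ) * (992 * D) ≤ 8 * (992 * D) := Nat.mul_le_mul_right _ (by omega)
      omega

end

section
variable {σ : Type*} {β a g : (σ → ℤ) → ℤ}

/-- The degrees of the quantities produced by the coding. -/
theorem PF_coding (P : MvPolynomial (Fin (58 + 1)) ℤ) (hβ : PF 2 β) (ha : PF 1 a) (hg : PF 1 g) :
    (PF (202 * 5 ^ 59 + 400) fun x => cN0 4 P (β x)) ∧
    (PF (202 * 5 ^ 59 + 400) fun x => cN 4 P (β x) ^ 2) ∧
    (PF (202 * 5 ^ 59 + 400) fun x => cX 4 P (β x) (a x) (g x)) := by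
  have hM : (4 + 1) ^ (58 + 1) = 5 ^ 59 := by norm_num
  have hM' : (4 + 1) ^ 58 * 5 = 5 ^ 59 := by norm_num
  have hH : PF 16 fun x => cH 4 P (β x) := (((hβ.pow 2).pow 4).cmul _).mono (by omega)
  have hQ : PF 16 fun x => cQ 4 P (β x) := hH.cmul 2
  have hN0 : PF (16 * ((4 + 1) ^ 58 + 1)) fun x => cN0 4 P (β x) := (hQ.pow _).mono (by omega)
  have hZ : PF (16 * (4 + 1) ^ 58 + 4) fun x => cZ 4 P (β x) := by
    refine PF.sum fun s hs => ((((hβ.pow 2).sub (.const 1))).mul (hQ.pow _)).mono ?_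
    have : (4 + 1) ^ (s + 1) ≤ (4 + 1) ^ 58 :=
      Nat.pow_le_pow_right (by norm_num) (Finset.mem_range.1 hs)
    omega
  have hc : PF (16 * 5 ^ 59) fun x => cbar 4 P (cQ 4 P (β x)) := by
    refine PF.sum fun i _ => ((hQ.pow _).cmul _).mono ?_
    have : (4 + 1) ^ (58 + 1) - ex 58 4 i ≤ (4 + 1) ^ (58 + 1) := Nat.sub_le _ _
    omega
  have hgeo : PF (64 * 5 ^ 59) fun x =>
      ∑ j ∈ Finset.range (4 * (4 + 1) ^ (58 + 1)), cQ 4 P (β x) ^ j := by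
    refine PF.sum fun j hj => (hQ.pow _).mono ?_
    have := Finset.mem_range.1 hj
    omega
  have hK : PF (64 * 5 ^ 59 + 68) fun x => cK 4 P (β x) (a x) (g x) :=
    ((((((PF.const 1).add (ha.mul hQ)).add hg).pow 4).mul hc).add (hH.mul hgeo)).mono (by omega)
  have hS : PF (64 * 5 ^ 59 + 16 * (4 + 1) ^ 58 + 100) fun x => cS 4 P (β x) (a x) (g x) :=
    ((hK.mul hN0).add hg).mono (by omega)
  have hT : PF (16 * 5 ^ 59 + 16 * (4 + 1) ^ 58 + 100) fun x => cT 4 P (β x) :=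
    ((((hH.sub (.const 1)).mul (hQ.pow _)).mul hN0).add
      ((hN0.sub (.const 1)).sub hZ)).mono (by omega)
  have hN : PF (64 * 5 ^ 59 + 16 * (4 + 1) ^ 58 + 16) fun x => cN 4 P (β x) :=
    (hN0.mul (hQ.pow _)).mono (by omega)
  refine ⟨hN0.mono (by omega), (hN.pow 2).mono (by omega), ?_⟩
  exact (((hS.add hT).mul (hN.pow 2)).add
    ((((hN.pow 2).sub (.const 1)).sub (hS.mul hN)).sub hT)).mono (by omega)

end

end UPair

/-! ### The reduction from natural to integer unknowns -/

namespace UPair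

theorem Dat.not_dvd_S (d : Dat) : ¬ 2 ∣ d.S ∧ ¬ 3 ∣ d.S := by
  have h : d.S = 4 * (48 * (d.N0 * d.X * (d.L ^ 2 + 1) * (d.V + 1))) - 5 := by
    simp only [Dat.S, Dat.aC, Dat.U]; ring
  omega

/-- The data of the system attached to the polynomial `P`, the parameter `x 0` and the unknowns
`x 1`, …, `x 9`; the last two unknowns `x 10` and `x 11` do not enter. -/
noncomputable def dat {ν : ℕ} (δ : ℕ) (P : MvPolynomial (Fin (ν + 1)) ℤ) (x : Fin 12 → ℤ) : Dat where
  β := cB (x 0) (x 1)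
  N0 := cN0 δ P (cB (x 0) (x 1))
  X := cX δ P (cB (x 0) (x 1)) (x 0) (x 2)
  Y := cN δ P (cB (x 0) (x 1)) ^ 2
  f := x 1
  g := x 2
  h := x 3
  k := x 4
  l := x 5
  w := x 6
  x := x 7
  y := x 8
  v := x 9

theorem one_le_cN0 {ν δ : ℕ} (P : MvPolynomial (Fin (ν + 1)) ℤ) (hδ : 0 < δ) {β : ℤ} (hβ : β ≠ 0) :
    1 ≤ cN0 δ P β := by
  have h := ((lam_lt_cH (δ := δ) (P := P) hβ).resolve_right hδ.ne').2.1
  have hQ : 0 < cQ δ P β := by unfold cQ; omega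
  exact Int.add_one_le_of_lt (pow_pos hQ _)

/-- A solution of the system in integers yields a zero of `P` in natural numbers. -/
theorem dat_sound {ν δ : ℕ} {P : MvPolynomial (Fin (ν + 1)) ℤ} (hP : P.totalDegree ≤ δ)
    (hδ : 0 < δ) (a : ℕ) {x : Fin 12 → ℤ} (hx : x 0 = a) (hd : (dat δ P x).Good) :
    ∃ z : Fin ν → ℕ, eval (Fin.cases (a : ℤ) (fun i => (z i : ℤ))) P = 0 := by
  have hB := hd.2.2
  simp only [Dat.Bnz, mul_ne_zero_iff] at hB
  obtain ⟨⟨⟨⟨⟨hv, -⟩, -⟩, -⟩, hβ⟩, hf⟩ := hB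
  have hβ' : cB (a : ℤ) (x 1) ≠ 0 := by rw [← hx]; exact hβ
  have hN : 1 ≤ (dat δ P x).N0 := one_le_cN0 P hδ hβ
  obtain ⟨hg, hgN, -⟩ := of_R_pos hN (R_pos hv (hd.1 4))
  have hab : x 0 < cB (x 0) (x 1) ^ 2 := by rw [hx]; exact lt_cB_sq a hf hβ'
  obtain ⟨-, -, h1, h2, -, h3⟩ := cX_bound (P := P) hδ hβ (by rw [hx]; exact Int.natCast_nonneg a)
    hab hg hgN
  obtain ⟨-, -, -, -, h4, h5⟩ := bridge_sound (dat δ P x) hN (le_trans (by omega) h1)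
    (one_le_pow₀ h3) hd
  simp only [dat, hx] at hg hgN h4 h5
  exact coding_sound hP hδ a hf hβ' hg hgN h4 h5

/-- A zero of `P` in natural numbers yields a solution of the system, whose data do not depend on the
last two unknowns. -/
theorem dat_complete {ν δ : ℕ} {P : MvPolynomial (Fin (ν + 1)) ℤ} (hP : P.totalDegree ≤ δ)
    (hδ : 0 < δ) (a : ℕ) (z : Fin ν → ℕ)
    (hz : eval (Fin.cases (a : ℤ) (fun i => (z i : ℤ))) P = 0) :
    ∃ d : Dat, d.Good ∧ ∃ f g h k l w x y v : ℤ, ∀ p n : ℤ,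
      dat δ P ![a, f, g, h, k, l, w, x, y, v, p, n] = d := by
  obtain ⟨f, g, hf, hβ, hg, hgN, h2, hY⟩ := coding_complete hP hδ a z hz
  obtain ⟨-, -, h1, h4, -, h3⟩ := cX_bound (P := P) hδ hβ (Int.natCast_nonneg a)
    (lt_cB_sq a hf hβ) hg hgN
  obtain ⟨h, k, l, w, x, y, v, H⟩ := bridge_complete hβ hf (one_le_cN0 P hδ hβ)
    (le_trans (by omega) h1) (one_le_pow₀ h3) hg hgN h2 hY
  exact ⟨_, H, f, g, h, k, l, w, x, y, v, fun p n => rfl⟩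

/-- A polynomial of degree at most `4` in `58` natural unknowns can be traded for one in `11`
integer unknowns. -/
theorem exists_integer_polynomial {P : MvPolynomial (Fin (58 + 1)) ℤ} (hP : P.totalDegree ≤ 4) :
    ∃ Q : MvPolynomial (Fin (11 + 1)) ℤ, Q.totalDegree ≤ 32 * (10000 * (202 * 5 ^ 59 + 400)) ∧
      ∀ a : ℕ, (∃ z : Fin 58 → ℕ,
          eval (Fin.cases (a : ℤ) (fun i => (z i : ℤ)) : Fin (58 + 1) → ℤ) P = 0) ↔
        ∃ z : Fin 11 → ℤ, eval (Fin.cases (a : ℤ) z : Fin (11 + 1) → ℤ) Q = 0 := by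
  have hv : ∀ i : Fin 12, PF (202 * 5 ^ 59 + 400) fun x : Fin 12 → ℤ => x i := fun i =>
    (PF.var i).mono (by omega)
  have hβ : PF 2 fun x : Fin 12 → ℤ => cB (x 0) (x 1) :=
    ((PF.const 1).add ((((PF.var 0).cmul 2).add (.const 1)).mul (.var 1))).mono (by omega)
  obtain ⟨hN, hY, hX⟩ := PF_coding P hβ (.var 0) (.var 2)
  obtain ⟨Q, hQ, hQe⟩ := PF_system (dd := dat 4 P) (p := fun x => x 10) (n := fun x => x 11)
    (by omega) (hβ.mono (by omega)) hN hX hY (hv 1) (hv 2) (hv 3) (hv 4) (hv 5) (hv 6) (hv 7)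
    (hv 8) (hv 9) (hv 10) (hv 11)
  refine ⟨Q, hQ, fun a => ⟨?_, ?_⟩⟩
  · rintro ⟨z, hz⟩
    obtain ⟨d, H, f, g, h, k, l, w, x, y, v, hd⟩ := dat_complete hP (by norm_num) a z hz
    obtain ⟨h2, h3⟩ := d.not_dvd_S
    obtain ⟨p, n, hpn⟩ := (combine _ h2 h3).1 H
    refine ⟨![f, g, h, k, l, w, x, y, v, p, n], ?_⟩
    have e : (Fin.cases (a : ℤ) ![f, g, h, k, l, w, x, y, v, p, n] : Fin (11 + 1) → ℤ)
        = ![(a : ℤ), f, g, h, k, l, w, x, y, v, p, n] := by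
      funext i; refine Fin.cases rfl (fun i => rfl) i
    rw [e, hQe]
    beta_reduce
    rw [hd]
    exact hpn
  · rintro ⟨z, hz⟩
    rw [hQe] at hz
    obtain ⟨h2, h3⟩ := (dat 4 P (Fin.cases (a : ℤ) z)).not_dvd_S
    exact dat_sound hP (by norm_num) a rfl ((combine _ h2 h3).2 ⟨_, _, hz⟩)

end UPair

theorem universal_pair_58_4 :
    (UniversalPairN 58 4 → UniversalPairZ 11 (eta 58 4)) ∧
    eta 58 4 = 951040 + 8419200 * 9 ^ 59 ∧
    eta 58 4 < 168105 * 10 ^ 58 := by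
  refine ⟨fun h A hA => ?_, by norm_num [eta], by norm_num [eta]⟩
  obtain ⟨P, hP, hPA⟩ := h A hA
  obtain ⟨Q, hQ, hQP⟩ := UPair.exists_integer_polynomial hP
  exact ⟨Q, hQ.trans (by norm_num [eta]), fun a => (hPA a).trans (hQP a)⟩
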